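/- Let Y be a squared-Bessel process of dimension δ > 0 started at y ≥ 0, let α ≥ 0, γ > −α, and A_t = ∫_1^t s^γ Y_s^α ds. Let Ỹ be a squared-Bessel process of dimension δ started at 0. Then A_t / t^{1+γ+α} converges in distribution, as t → ∞, to ∫_0^1 s^γ Ỹ_s^α ds. -/

import Mathlib

open MeasureTheory Filter Set

/-- `Y` is a squared-Bessel process of dimension `δ` started at `y`, characterized via the
martingale problem: `Y_t - y - δ t` is a martingale with quadratic variation `4∫_0^t Y_s ds`. -/
structure IsBESQ {Ω : Type*} {m : MeasurableSpace Ω} (μ : Measure Ω)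
    (ℱ : Filtration ℝ m) (δ y : ℝ) (Y : ℝ → Ω → ℝ) : Prop where
  nonneg : ∀ t ω, 0 ≤ Y t ω
  cont : ∀ ω, Continuous fun t => Y t ω
  init : ∀ ω, Y 0 ω = y
  adapted : Adapted ℱ Y
  integrable_sq : ∀ t : ℝ, Integrable (fun ω => (Y t ω) ^ 2) μ
  mart : ∀ s t : ℝ, 0 ≤ s → s ≤ t →
    (μ[(fun ω => Y t ω - y - δ * t) | ℱ s]) =ᵐ[μ] fun ω => Y s ω - y - δ * s
  qv : ∀ s t : ℝ, 0 ≤ s → s ≤ t →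
    (μ[(fun ω => (Y t ω - y - δ * t) ^ 2 - 4 * ∫ u in (0:ℝ)..t, Y u ω) | ℱ s])
      =ᵐ[μ] fun ω => (Y s ω - y - δ * s) ^ 2 - 4 * ∫ u in (0:ℝ)..s, Y u ω


set_option linter.unusedSectionVars false
set_option linter.unusedVariables false

namespace IsBESQ

variable {Ω : Type*} {m : MeasurableSpace Ω} {μ : Measure Ω} [IsProbabilityMeasure μ]
  {ℱ : Filtration ℝ m} {δ y : ℝ} {Y : ℝ → Ω → ℝ}

lemma meas (hY : IsBESQ μ ℱ δ y Y) (t : ℝ) : Measurable (Y t) := hY.adapted.measurable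

lemma smeas (hY : IsBESQ μ ℱ δ y Y) {s t : ℝ} (h : s ≤ t) : StronglyMeasurable[ℱ t] (Y s) :=
  Measurable.stronglyMeasurable (hY.adapted.measurable_le h)

lemma jmeas (hY : IsBESQ μ ℱ δ y Y) : Measurable (Function.uncurry Y) :=
  measurable_uncurry_of_continuous_of_measurable hY.cont hY.meas

lemma memLp (hY : IsBESQ μ ℱ δ y Y) (t : ℝ) : MemLp (Y t) 2 μ :=
  (memLp_two_iff_integrable_sq (hY.meas t).aestronglyMeasurable).2 (hY.integrable_sq t)

lemma integrable (hY : IsBESQ μ ℱ δ y Y) (t : ℝ) : Integrable (Y t) μ :=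
  (hY.memLp t).integrable (by norm_num)

/-- generic pull-out -/
lemma weak_of_condExp {m0 : MeasurableSpace Ω} (hm : m0 ≤ m) {f g W : Ω → ℝ}
    (hW : StronglyMeasurable[m0] W) (hf : Integrable f μ)
    (hWf : Integrable (fun ω => W ω * f ω) μ)
    (h : μ[f | m0] =ᵐ[μ] g) : ∫ ω, W ω * f ω ∂μ = ∫ ω, W ω * g ω ∂μ := by
  have h1 := condExp_mul_of_stronglyMeasurable_left (μ := μ) hW hWf hf
  have h2 := integral_condExp (μ := μ) hm (f := fun ω => W ω * f ω)
  rw [← h2]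
  apply integral_congr_ae
  filter_upwards [h1, h] with ω h1 h
  have h1' : (μ[fun ω => W ω * f ω | m0]) ω = W ω * (μ[f | m0]) ω := h1
  rw [h1', h]

lemma weak_mart (hY : IsBESQ μ ℱ δ y Y) {s t : ℝ} (hs : 0 ≤ s) (hst : s ≤ t) {W : Ω → ℝ}
    (hW : StronglyMeasurable[ℱ s] W) (hW2 : MemLp W 2 μ) :
    ∫ ω, W ω * Y t ω ∂μ = ∫ ω, W ω * Y s ω ∂μ + δ * (t - s) * ∫ ω, W ω ∂μ := by
  have hWi : Integrable W μ := hW2.integrable (by norm_num)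
  have i1 : ∀ t, Integrable (fun ω => W ω * Y t ω) μ := fun t => hW2.integrable_mul (hY.memLp t)
  have e1 : ∀ t, ∫ ω, W ω * (Y t ω - y - δ * t) ∂μ
      = ∫ ω, W ω * Y t ω ∂μ - (y + δ * t) * ∫ ω, W ω ∂μ := by
    intro t
    rw [← integral_const_mul, ← integral_sub (i1 t) (hWi.const_mul _)]
    congr 1; ext ω; ring
  have i2 : Integrable (fun ω => W ω * (Y t ω - y - δ * t)) μ := by
    have := (i1 t).sub (hWi.const_mul (y + δ * t))
    refine this.congr (ae_of_all _ fun ω => ?_)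
    simp; ring
  have := weak_of_condExp (ℱ.le s) hW
    (((hY.integrable t).sub (integrable_const y)).sub (integrable_const (δ * t))) i2 (hY.mart s t hs hst)
  simp only [Pi.sub_apply] at this
  rw [e1, e1] at this
  linarith

lemma mean (hY : IsBESQ μ ℱ δ y Y) {t : ℝ} (ht : 0 ≤ t) : ∫ ω, Y t ω ∂μ = y + δ * t := by
  have := hY.weak_mart le_rfl ht (W := fun _ => 1) stronglyMeasurable_const (memLp_const _)
  simp [hY.init] at this
  exact this

lemma prod_integrable (hY : IsBESQ μ ℱ δ y Y) {s t : ℝ} (hs : 0 ≤ s) (hst : s ≤ t) :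
    Integrable (fun p : ℝ × Ω => Y p.1 p.2) ((volume.restrict (Ioc s t)).prod μ) := by
  have hm : AEStronglyMeasurable (fun p : ℝ × Ω => Y p.1 p.2) ((volume.restrict (Ioc s t)).prod μ) :=
    hY.jmeas.aestronglyMeasurable
  rw [integrable_prod_iff hm]
  refine ⟨ae_of_all _ fun u => hY.integrable u, ?_⟩
  have : IntegrableOn (fun u => y + δ * u) (Ioc s t) :=
    (Continuous.integrableOn_Icc (by fun_prop)).mono_set Ioc_subset_Icc_self
  refine Integrable.congr this ?_
  filter_upwards [ae_restrict_mem measurableSet_Ioc] with u hu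
  rw [← hY.mean (hs.trans hu.1.le)]
  congr 1; ext ω
  simp [abs_of_nonneg (hY.nonneg u ω)]

lemma int_integrable (hY : IsBESQ μ ℱ δ y Y) {s t : ℝ} (hs : 0 ≤ s) (hst : s ≤ t) :
    Integrable (fun ω => ∫ u in s..t, Y u ω) μ := by
  simp only [intervalIntegral.integral_of_le hst]
  exact (hY.prod_integrable hs hst).integral_prod_right

lemma weak_int (hY : IsBESQ μ ℱ δ y Y) {s t : ℝ} (hs : 0 ≤ s) (hst : s ≤ t) {W : Ω → ℝ} {C : ℝ}
    (hW : StronglyMeasurable[ℱ s] W) (hC : ∀ ω, |W ω| ≤ C) :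
    ∫ ω, W ω * (∫ u in s..t, Y u ω) ∂μ = (t - s) * ∫ ω, W ω * Y s ω ∂μ
      + δ * (t - s) ^ 2 / 2 * ∫ ω, W ω ∂μ := by
  have hWm := (hW.mono (ℱ.le s))
  have hW2 : MemLp W 2 μ := MemLp.of_bound hWm.aestronglyMeasurable C (ae_of_all _ hC)
  have h1 : Integrable (Function.uncurry fun (ω : Ω) (u : ℝ) => W ω * Y u ω)
      (μ.prod (volume.restrict (Ioc s t))) := by
    have := (hY.prod_integrable hs hst).swap
    refine this.bdd_mul (c := C) (f := fun p : Ω × ℝ => W p.1) ?_ (ae_of_all _ fun p => hC _)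
    exact (hWm.comp_measurable measurable_fst).aestronglyMeasurable
  simp_rw [← intervalIntegral.integral_const_mul, intervalIntegral.integral_of_le hst]
  rw [integral_integral_swap h1]
  have : ∀ u ∈ Ioc s t, ∫ ω, W ω * Y u ω ∂μ = ∫ ω, W ω * Y s ω ∂μ + δ * (u - s) * ∫ ω, W ω ∂μ :=
    fun u hu => hY.weak_mart hs hu.1.le hW hW2
  rw [setIntegral_congr_fun measurableSet_Ioc this, ← intervalIntegral.integral_of_le hst]
  rw [intervalIntegral.integral_add (by apply Continuous.intervalIntegrable; fun_prop) (by apply Continuous.intervalIntegrable; fun_prop)]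
  simp only [intervalIntegral.integral_const, intervalIntegral.integral_mul_const, intervalIntegral.integral_const_mul, smul_eq_mul]
  rw [intervalIntegral.integral_sub (by apply Continuous.intervalIntegrable; fun_prop) (by apply Continuous.intervalIntegrable; fun_prop)]
  simp only [integral_id, intervalIntegral.integral_const, smul_eq_mul]
  ring

lemma weak_sq (hY : IsBESQ μ ℱ δ y Y) {s t : ℝ} (hs : 0 ≤ s) (hst : s ≤ t) {W : Ω → ℝ} {C : ℝ}
    (hW : StronglyMeasurable[ℱ s] W) (hC : ∀ ω, |W ω| ≤ C) :
    ∫ ω, W ω * (Y t ω - Y s ω) ^ 2 ∂μ = 4 * (t - s) * ∫ ω, W ω * Y s ω ∂μ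
      + (2 * δ + δ ^ 2) * (t - s) ^ 2 * ∫ ω, W ω ∂μ := by
  have hWm := (hW.mono (ℱ.le s))
  have hW2 : MemLp W 2 μ := MemLp.of_bound hWm.aestronglyMeasurable C (ae_of_all _ hC)
  have hWi : Integrable W μ := hW2.integrable (by norm_num)
  have ht : 0 ≤ t := hs.trans hst
  have bd : ∀ {f : Ω → ℝ}, Integrable f μ → Integrable (fun ω => W ω * f ω) μ := fun hf =>
    hf.bdd_mul hWm.aestronglyMeasurable (ae_of_all _ hC)
  have iY : ∀ t, Integrable (Y t) μ := hY.integrable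
  have iM : ∀ t, Integrable (fun ω => (Y t ω - y - δ * t) ^ 2) μ := fun t =>
    (((hY.memLp t).sub (memLp_const y)).sub (memLp_const (δ * t))).integrable_sq
  have iI : ∀ t, 0 ≤ t → Integrable (fun ω => ∫ u in (0:ℝ)..t, Y u ω) μ := fun t ht =>
    hY.int_integrable le_rfl ht
  have iQ : ∀ t, 0 ≤ t → Integrable (fun ω => (Y t ω - y - δ * t) ^ 2 - 4 * ∫ u in (0:ℝ)..t, Y u ω) μ :=
    fun t ht => (iM t).sub ((iI t ht).const_mul 4)
  have q := weak_of_condExp (ℱ.le s) hW (iQ t ht) (bd (iQ t ht)) (hY.qv s t hs hst)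
  have hWY : MemLp (fun ω => W ω * Y s ω) 2 μ :=
    (hY.memLp s).of_le_mul (c := C) (hWm.mul (hY.meas s).stronglyMeasurable).aestronglyMeasurable
      (ae_of_all _ fun ω => by
        rw [norm_mul]; exact mul_le_mul_of_nonneg_right (hC ω) (norm_nonneg _))
  have e1 := hY.weak_mart hs hst (hW.mul (hY.smeas le_rfl)) hWY
  have e2 := hY.weak_mart hs hst hW hW2
  have e3 := hY.weak_int hs hst hW hC
  simp only [Pi.mul_apply] at e1
  have iYY : Integrable (fun ω => Y s ω * Y t ω) μ := (hY.memLp s).integrable_mul (hY.memLp t)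
  have x1 : ∫ ω, W ω * (Y t ω - Y s ω) ^ 2 ∂μ = ∫ ω, W ω * (Y t ω) ^ 2 ∂μ
     - 2 * ∫ ω, W ω * Y s ω * Y t ω ∂μ + ∫ ω, W ω * (Y s ω) ^ 2 ∂μ := by
    rw [← integral_const_mul, ← integral_sub (bd (hY.integrable_sq t)), ← integral_add]
    · congr 1; ext ω; ring
    · exact (bd (hY.integrable_sq t)).sub ((hWY.integrable_mul (hY.memLp t)).const_mul 2)
    · exact bd (hY.integrable_sq s)
    · exact ((hWY.integrable_mul (hY.memLp t)).const_mul 2)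
  have x2 : ∀ t, 0 ≤ t → ∫ ω, W ω * ((Y t ω - y - δ * t) ^ 2 - 4 * ∫ u in (0:ℝ)..t, Y u ω) ∂μ
      = ∫ ω, W ω * (Y t ω) ^ 2 ∂μ - 2 * (y + δ * t) * ∫ ω, W ω * Y t ω ∂μ
        + (y + δ * t) ^ 2 * ∫ ω, W ω ∂μ - 4 * ∫ ω, W ω * (∫ u in (0:ℝ)..t, Y u ω) ∂μ := by
    intro t ht
    have j1 := bd (hY.integrable_sq t)
    have j2 := (bd (iY t)).const_mul (2 * (y + δ * t))
    have j3 := hWi.const_mul ((y + δ * t) ^ 2)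
    have j4 := (bd (iI t ht)).const_mul 4
    rw [← integral_const_mul, ← integral_const_mul, ← integral_const_mul, ← integral_sub j1 j2,
      ← integral_add ?_ j3, ← integral_sub ?_ j4]
    · congr 1; ext ω; ring
    · exact (j1.sub j2).add j3
    · exact j1.sub j2
  have x3 : ∫ ω, W ω * (∫ u in (0:ℝ)..t, Y u ω) ∂μ = ∫ ω, W ω * (∫ u in (0:ℝ)..s, Y u ω) ∂μ
      + ∫ ω, W ω * (∫ u in s..t, Y u ω) ∂μ := by
    rw [← integral_add (bd (iI s hs)) (bd (hY.int_integrable hs hst))]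
    congr 1; ext ω
    rw [← mul_add, intervalIntegral.integral_add_adjacent_intervals] <;>
    exact (hY.cont ω).intervalIntegrable _ _
  rw [x2 t ht, x2 s hs, x3, e3, e2] at q
  have x4 : ∫ ω, W ω * Y s ω * Y s ω ∂μ = ∫ ω, W ω * (Y s ω) ^ 2 ∂μ := by
    congr 1; ext ω; ring
  rw [x4] at e1
  rw [x1, e1]
  linear_combination q

lemma second_moment (hY : IsBESQ μ ℱ δ y Y) {t : ℝ} (ht : 0 ≤ t) :
    ∫ ω, (Y t ω) ^ 2 ∂μ = (y + δ * t) ^ 2 + 4 * y * t + 2 * δ * t ^ 2 := by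
  have h := hY.weak_sq le_rfl ht (W := fun _ => 1) (C := 1) stronglyMeasurable_const (by simp)
  simp [hY.init] at h
  have : ∫ ω, (Y t ω - y) ^ 2 ∂μ = ∫ ω, (Y t ω) ^ 2 ∂μ - 2 * y * ∫ ω, Y t ω ∂μ + y ^ 2 := by
    rw [← integral_const_mul, ← integral_sub (hY.integrable_sq t) ((hY.integrable t).const_mul _)]
    have : y ^ 2 = ∫ ω, y ^ 2 ∂μ := by simp
    rw [this, ← integral_add]
    · congr 1; ext ω; ring
    · exact (hY.integrable_sq t).sub ((hY.integrable t).const_mul _)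
    · exact integrable_const _
  rw [this, hY.mean ht] at h
  linear_combination h

end IsBESQ

lemma sm_sup {α : Type*} {m0 : MeasurableSpace α} {f g : α → ℝ} (hf : StronglyMeasurable[m0] f)
    (hg : StronglyMeasurable[m0] g) : StronglyMeasurable[m0] (fun x => f x ⊔ g x) :=
  StronglyMeasurable.sup hf hg

lemma doob_path_aux (S : ℕ → ℝ) (hS : ∀ n, 0 ≤ S n) (n : ℕ) :
    (partialSups S n) ^ 2 / 2 ≤ partialSups S n * S n
      - ∑ k ∈ Finset.range n, partialSups S k * (S (k + 1) - S k) := by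
  induction n with
  | zero => simp; nlinarith [sq_nonneg (S 0)]
  | succ n ih =>
    rw [Finset.sum_range_succ, partialSups_add_one]
    rcases le_total (S (n+1)) (partialSups S n) with h | h
    · rw [sup_eq_left.2 h]; nlinarith
    · rw [sup_eq_right.2 h]; nlinarith [sq_nonneg (S (n+1) - partialSups S n)]

lemma doob_path (S : ℕ → ℝ) (hS : ∀ n, 0 ≤ S n) (n : ℕ) :
    (partialSups S n) ^ 2 ≤ 4 * S n ^ 2
      - 4 * ∑ k ∈ Finset.range n, partialSups S k * (S (k + 1) - S k) := by
  have := doob_path_aux S hS n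
  nlinarith [sq_nonneg (partialSups S n - 2 * S n)]

namespace IsBESQ

variable {Ω : Type*} {m : MeasurableSpace Ω} {μ : Measure Ω} [IsProbabilityMeasure μ]
  {ℱ : Filtration ℝ m} {δ y : ℝ} {Y : ℝ → Ω → ℝ}

lemma psup_smeas (hY : IsBESQ μ ℱ δ y Y) {h : ℝ} (hh : 0 ≤ h) (n : ℕ) :
    StronglyMeasurable[ℱ (n * h)] (fun ω => partialSups (fun k : ℕ => Y (k * h) ω) n) := by
  induction n with
  | zero => simpa using hY.smeas (s := 0) (t := ((0:ℕ):ℝ) * h) (by simp)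
  | succ n ih =>
    simp only [partialSups_add_one]
    have h1 := ih.mono (ℱ.mono (i := n * h) (j := (n + 1 : ℕ) * h) (by push_cast; nlinarith))
    have h2 := hY.smeas (s := (n + 1 : ℕ) * h) le_rfl
    exact sm_sup h1 h2

lemma psup_memLp (hY : IsBESQ μ ℱ δ y Y) {h : ℝ} (hh : 0 ≤ h) (n : ℕ) :
    MemLp (fun ω => partialSups (fun k : ℕ => Y (k * h) ω) n) 2 μ := by
  induction n with
  | zero => simpa using hY.memLp 0
  | succ n ih =>
    simp only [partialSups_add_one]
    exact ih.sup (hY.memLp _)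

lemma doob_grid (hY : IsBESQ μ ℱ δ y Y) (hδ : 0 ≤ δ) {h : ℝ} (hh : 0 ≤ h) (n : ℕ) :
    ∫ ω, (partialSups (fun k : ℕ => Y (k * h) ω) n) ^ 2 ∂μ ≤ 4 * ∫ ω, (Y (n * h) ω) ^ 2 ∂μ := by
  have i0 : ∀ k : ℕ, Integrable (fun ω => partialSups (fun k : ℕ => Y (k * h) ω) k *
      (Y ((k + 1 : ℕ) * h) ω - Y (k * h) ω)) μ := fun k =>
    (hY.psup_memLp hh k).integrable_mul ((hY.memLp _).sub (hY.memLp _))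
  have i1 : Integrable (fun ω => ∑ k ∈ Finset.range n, partialSups (fun k : ℕ => Y (k * h) ω) k *
      (Y ((k + 1 : ℕ) * h) ω - Y (k * h) ω)) μ := integrable_finsetSum _ fun k _ => i0 k
  have h1 : ∫ ω, (partialSups (fun k : ℕ => Y (k * h) ω) n) ^ 2 ∂μ ≤
      ∫ ω, (4 * (Y (n * h) ω) ^ 2 - 4 * ∑ k ∈ Finset.range n, partialSups (fun k : ℕ => Y (k * h) ω) k *
      (Y ((k + 1 : ℕ) * h) ω - Y (k * h) ω)) ∂μ := by
    apply integral_mono (hY.psup_memLp hh n).integrable_sq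
    · exact ((hY.integrable_sq _).const_mul 4).sub (i1.const_mul 4)
    · intro ω
      exact doob_path (fun k : ℕ => Y (k * h) ω) (fun k => hY.nonneg _ _) n
  refine h1.trans ?_
  rw [integral_sub ((hY.integrable_sq _).const_mul 4) (i1.const_mul 4), integral_const_mul, integral_const_mul,
    integral_finsetSum _ fun k _ => i0 k]
  have : 0 ≤ ∑ k ∈ Finset.range n, ∫ ω, partialSups (fun k : ℕ => Y (k * h) ω) k *
      (Y ((k + 1 : ℕ) * h) ω - Y (k * h) ω) ∂μ := by
    apply Finset.sum_nonneg
    intro k _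
    have e := hY.weak_mart (s := k * h) (t := (k+1 : ℕ) * h) (by positivity) (by push_cast; nlinarith)
      (hY.psup_smeas hh k) (hY.psup_memLp hh k)
    simp_rw [mul_sub]
    have i2 : ∀ t, Integrable (fun ω => partialSups (fun k : ℕ => Y (k * h) ω) k * Y t ω) μ :=
      fun t => (hY.psup_memLp hh k).integrable_mul (hY.memLp t)
    rw [integral_sub (i2 _) (i2 _), e]
    have : 0 ≤ ∫ ω, partialSups (fun k : ℕ => Y (k * h) ω) k ∂μ := by
      apply integral_nonneg
      intro ω
      exact (hY.nonneg _ ω).trans (le_partialSups (fun k : ℕ => Y (k * h) ω) k)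
    have h3 : ((k+1 : ℕ) : ℝ) * h - k * h = h := by push_cast; ring
    rw [h3]
    have := mul_nonneg (mul_nonneg hδ hh) this
    linarith
  linarith

lemma exists_sup (hY : IsBESQ μ ℱ δ y Y) (hδ : 0 ≤ δ) {T : ℝ} (hT : 0 < T) :
    ∃ V : Ω → ℝ, Integrable V μ ∧ (∀ ω, 0 ≤ V ω) ∧ ∫ ω, V ω ∂μ ≤ 4 * ∫ ω, (Y T ω) ^ 2 ∂μ ∧
      ∀ᵐ ω ∂μ, ∀ u ∈ Icc 0 T, (Y u ω) ^ 2 ≤ V ω := by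
  let P : ℕ → Ω → ℝ := fun n ω => partialSups (fun k : ℕ => Y (k * (T / 2 ^ n)) ω) (2 ^ n)
  have hP0 : ∀ n ω, 0 ≤ P n ω := fun n ω =>
    (hY.nonneg _ ω).trans (le_partialSups (fun k : ℕ => Y (k * (T / 2 ^ n)) ω) (2 ^ n))
  have hPle : ∀ n ω (k : ℕ), k ≤ 2 ^ n → Y (k * (T / 2 ^ n)) ω ≤ P n ω := fun n ω k hk =>
    le_partialSups_of_le (fun k : ℕ => Y (k * (T / 2 ^ n)) ω) hk
  have hh : ∀ n : ℕ, 0 ≤ T / 2 ^ n := fun n => by positivity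
  have hPm : ∀ n, Measurable (P n) := fun n => ((hY.psup_smeas (hh n) (2 ^ n)).mono (ℱ.le _)).measurable
  let V : Ω → ENNReal := fun ω => ⨆ n, ENNReal.ofReal ((P n ω) ^ 2)
  have hVm : Measurable V := Measurable.iSup fun n => ((hPm n).pow_const 2).ennreal_ofReal
  have hmono : Monotone fun n ω => ENNReal.ofReal ((P n ω) ^ 2) := by
    refine monotone_nat_of_le_succ fun n ω => ?_
    apply ENNReal.ofReal_le_ofReal
    apply pow_le_pow_left₀ (hP0 n ω)
    apply partialSups_le
    intro k hk
    have := hPle (n+1) ω (2 * k) (by rw [pow_succ]; omega)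
    have e : (k : ℝ) * (T / 2 ^ n) = ((2 * k : ℕ) : ℝ) * (T / 2 ^ (n + 1)) := by
      push_cast; rw [pow_succ]; field_simp
    rw [e]; exact this
  have hVint : ∫⁻ ω, V ω ∂μ ≤ ENNReal.ofReal (4 * ∫ ω, (Y T ω) ^ 2 ∂μ) := by
    rw [lintegral_iSup (fun n => ((hPm n).pow_const 2).ennreal_ofReal) hmono]
    apply iSup_le
    intro n
    rw [← ofReal_integral_eq_lintegral_ofReal (hY.psup_memLp (hh n) (2^n)).integrable_sq
      (ae_of_all _ fun ω => sq_nonneg _)]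
    apply ENNReal.ofReal_le_ofReal
    have := hY.doob_grid hδ (hh n) (2 ^ n)
    have e : ((2 ^ n : ℕ) : ℝ) * (T / 2 ^ n) = T := by push_cast; field_simp
    rw [e] at this
    exact this
  have hVfin : ∀ᵐ ω ∂μ, V ω < ⊤ := ae_lt_top hVm (hVint.trans_lt ENNReal.ofReal_lt_top).ne
  have hVne : ∫⁻ ω, V ω ∂μ ≠ ⊤ := (hVint.trans_lt ENNReal.ofReal_lt_top).ne
  refine ⟨fun ω => (V ω).toReal, integrable_toReal_of_lintegral_ne_top hVm.aemeasurable hVne,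
    fun ω => ENNReal.toReal_nonneg, ?_, ?_⟩
  · rw [integral_toReal hVm.aemeasurable hVfin]
    apply ENNReal.toReal_le_of_le_ofReal _ hVint
    have : 0 ≤ ∫ ω, (Y T ω) ^ 2 ∂μ := integral_nonneg fun ω => sq_nonneg _
    positivity
  · filter_upwards [hVfin] with ω hω u hu
    have hlim : Tendsto (fun n : ℕ => (Y ((⌊u / T * 2 ^ n⌋₊ : ℝ) * (T / 2 ^ n)) ω) ^ 2) atTop
        (nhds ((Y u ω) ^ 2)) := by
      have h1 : Tendsto (fun n : ℕ => (⌊u / T * 2 ^ n⌋₊ : ℝ) / 2 ^ n) atTop (nhds (u / T)) :=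
        (tendsto_nat_floor_mul_div_atTop (R := ℝ) (a := u / T) (div_nonneg hu.1 hT.le)).comp
          (tendsto_pow_atTop_atTop_of_one_lt (r := (2:ℝ)) (by norm_num))
      have h2 := h1.mul_const T
      rw [div_mul_cancel₀ _ hT.ne'] at h2
      have h3 := (((hY.cont ω).tendsto u).comp h2).pow 2
      refine h3.congr fun n => ?_
      simp only [Function.comp]
      congr 2
      ring
    refine le_of_tendsto hlim (Eventually.of_forall fun n => ?_)
    have hk : ⌊u / T * 2 ^ n⌋₊ ≤ 2 ^ n := by
      apply Nat.floor_le_of_le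
      push_cast
      have : u / T ≤ 1 := (div_le_one hT).2 hu.2
      have h2 : (0:ℝ) < 2 ^ n := by positivity
      nlinarith
    have h4 := hPle n ω _ hk
    have h5 : ENNReal.ofReal ((P n ω) ^ 2) ≤ V ω := le_iSup (fun n => ENNReal.ofReal ((P n ω) ^ 2)) n
    have h6 := (ENNReal.ofReal_le_iff_le_toReal hω.ne).1 h5
    exact (pow_le_pow_left₀ (hY.nonneg _ _) h4 2).trans h6

end IsBESQ

/-- The truncated cubic remainder. -/
noncomputable def rem3 (d : ℝ) : ℝ := d ^ 2 * min 1 |d|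

lemma rem3_nonneg (d : ℝ) : 0 ≤ rem3 d := by unfold rem3; positivity

lemma rem3_le_sq (d : ℝ) : rem3 d ≤ d ^ 2 := by
  unfold rem3
  nlinarith [sq_nonneg d, min_le_left 1 |d|]

lemma measurable_rem3 : Measurable rem3 := by unfold rem3; fun_prop

lemma exp_taylor_aux (d : ℝ) (hd : |d| ≤ 1) : |Real.exp (-d) - (1 - d + d ^ 2 / 2)| ≤ |d| ^ 3 := by
  have h := Real.exp_bound (x := -d) (by rwa [abs_neg]) (n := 3) (by norm_num)
  simp [Finset.sum_range_succ, Nat.factorial] at h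
  have e : Real.exp (-d) - (1 - d + d ^ 2 / 2) = Real.exp (-d) - (1 + -d + d ^ 2 / 2) := by ring
  rw [e]
  refine h.trans ?_
  have : 0 ≤ |d| ^ 3 := by positivity
  nlinarith

lemma exp_taylor (p q c : ℝ) (hp : 0 ≤ p) (hq : 0 ≤ q) (hc : 0 ≤ c) :
    |Real.exp (-q - c) - Real.exp (-p - c) * (1 - (q - p) + (q - p) ^ 2 / 2)| ≤ 4 * rem3 (q - p) := by
  set d := q - p with hd
  unfold rem3
  have hE1 : Real.exp (-q - c) ≤ 1 := Real.exp_le_one_iff.2 (by linarith)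
  have hE2 : Real.exp (-p - c) ≤ 1 := Real.exp_le_one_iff.2 (by linarith)
  have hE1' := Real.exp_pos (-q - c)
  have hE2' := Real.exp_pos (-p - c)
  rcases le_total |d| 1 with h | h
  · rw [min_eq_right h]
    have e : Real.exp (-q - c) = Real.exp (-p - c) * Real.exp (-d) := by
      rw [← Real.exp_add]; congr 1; rw [hd]; ring
    rw [e, ← mul_sub, abs_mul, abs_of_pos hE2']
    have h1 := exp_taylor_aux d h
    have h2 : d ^ 2 * |d| = |d| ^ 3 := by rw [← sq_abs]; ring
    rw [h2]
    have : 0 ≤ |d| ^ 3 := by positivity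
    nlinarith [abs_nonneg (Real.exp (-d) - (1 - d + d ^ 2 / 2))]
  · rw [min_eq_left h]
    have h2 : 1 ≤ d ^ 2 := by rw [← sq_abs]; nlinarith
    have h3 : |1 - d + d ^ 2 / 2| ≤ 3 * d ^ 2 := by
      rw [abs_le]
      rw [← sq_abs] at *
      constructor <;> nlinarith [neg_abs_le d, le_abs_self d]
    have h4 : |Real.exp (-p - c) * (1 - d + d ^ 2 / 2)| ≤ 3 * d ^ 2 := by
      rw [abs_mul, abs_of_pos hE2']
      nlinarith [abs_nonneg (1 - d + d ^ 2 / 2)]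
    have := abs_sub (Real.exp (-q - c)) (Real.exp (-p - c) * (1 - d + d ^ 2 / 2))
    rw [abs_of_pos hE1'] at this
    linarith

lemma exp_first (z1 w : ℝ) (h1 : z1 ≤ 0) (h0 : z1 + w ≤ 0) :
    |Real.exp z1 - Real.exp (z1 + w) + w * Real.exp z1| ≤ w ^ 2 := by
  have hE1 : Real.exp z1 ≤ 1 := Real.exp_le_one_iff.2 h1
  have hE0 : Real.exp (z1 + w) ≤ 1 := Real.exp_le_one_iff.2 h0
  have p1 := Real.exp_pos z1
  have p0 := Real.exp_pos (z1 + w)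
  have a1 : Real.exp z1 * (w + 1) ≤ Real.exp (z1 + w) := by
    rw [Real.exp_add]; exact mul_le_mul_of_nonneg_left (Real.add_one_le_exp w) p1.le
  have a2 : Real.exp (z1 + w) * (-w + 1) ≤ Real.exp z1 := by
    have : Real.exp z1 = Real.exp (z1 + w) * Real.exp (-w) := by rw [← Real.exp_add]; congr 1; ring
    rw [this]; exact mul_le_mul_of_nonneg_left (Real.add_one_le_exp (-w)) p0.le
  rw [abs_le]
  constructor
  · rcases le_total 0 w with hw | hw
    · have : Real.exp (z1 + w) - Real.exp z1 ≤ w := by nlinarith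
      nlinarith
    · have : -w ≥ Real.exp z1 - Real.exp (z1 + w) := by nlinarith
      nlinarith
  · nlinarith [sq_nonneg w]

lemma rem3_mul (a l d : ℝ) (ha : 0 ≤ a) (hal : a ≤ l) : rem3 (a * d) ≤ l ^ 2 * (1 + l) * rem3 d := by
  unfold rem3
  have h1 : (a * d) ^ 2 ≤ l ^ 2 * d ^ 2 := by
    rw [mul_pow]; gcongr
  have h2 : min 1 |a * d| ≤ (1 + l) * min 1 |d| := by
    rw [abs_mul, abs_of_nonneg ha]
    rcases le_total 1 |d| with h | h
    · rw [min_eq_left h]; exact (min_le_left _ _).trans (by linarith)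
    · rw [min_eq_right h]; exact (min_le_right _ _).trans (by nlinarith [abs_nonneg d])
  have h3 : 0 ≤ min 1 |a * d| := by positivity
  calc (a * d) ^ 2 * min 1 |a * d| ≤ (l ^ 2 * d ^ 2) * ((1 + l) * min 1 |d|) := by gcongr
    _ = _ := by ring

set_option maxHeartbeats 1000000 in
lemma step_bound (l δ D h x x' : ℝ) (hl : 0 ≤ l) (hδ : 0 ≤ δ) (hD : 1 ≤ D) (hh : 0 ≤ h)
    (hx : 0 ≤ x) (hx' : 0 ≤ x') :
    |Real.exp (-(l / D * x') - δ / 2 * Real.log D)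
      - Real.exp (-(l / (D + 2 * l * h) * x) - δ / 2 * Real.log (D + 2 * l * h))
      - Real.exp (-(l / D * x) - δ / 2 * Real.log D) *
        (-(l / D) * (x' - x - δ * h) + (l / D) ^ 2 / 2 * ((x' - x) ^ 2 - 4 * h * x))|
      ≤ 4 * (l ^ 2 * (1 + l)) * rem3 (x' - x)
        + ((2 * l ^ 2 + δ * l) ^ 2 + 4 * l ^ 3 + 2 * δ * l ^ 2) * (h ^ 2 * (1 + x) ^ 2) := by
  have hD0 : 0 < D := by linarith
  have hlh : 0 ≤ l * h := mul_nonneg hl hh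
  have hD'0 : 0 < D + 2 * l * h := by nlinarith
  set a1 := l / D with ha1
  set a0 := l / (D + 2 * l * h) with ha0
  have a1n : 0 ≤ a1 := by positivity
  have a0n : 0 ≤ a0 := by positivity
  have a1l : a1 ≤ l := div_le_self hl hD
  have a0l : a0 ≤ l := div_le_self hl (by nlinarith)
  have hdiff : a1 - a0 = 2 * a1 * a0 * h := by
    rw [ha1, ha0]; field_simp; ring
  set c1 := δ / 2 * Real.log D with hc1
  set c0 := δ / 2 * Real.log (D + 2 * l * h) with hc0
  have c1n : 0 ≤ c1 := mul_nonneg (by linarith) (Real.log_nonneg hD)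
  have c0n : 0 ≤ c0 := mul_nonneg (by linarith) (Real.log_nonneg (by nlinarith))
  set q := 2 * a1 * h with hq
  have q0 : 0 ≤ q := by positivity
  have ql : q ≤ 2 * l * h := by rw [hq]; gcongr
  have hcd : c0 - c1 = δ / 2 * Real.log (1 + q) := by
    rw [hc0, hc1, ← mul_sub, ← Real.log_div hD'0.ne' hD0.ne']
    congr 2; rw [hq, ha1]; field_simp
  have lg1 : Real.log (1 + q) ≤ q := by
    have := Real.log_le_sub_one_of_pos (x := 1 + q) (by linarith); linarith
  have lg2 : q - q ^ 2 ≤ Real.log (1 + q) := by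
    have := Real.one_sub_inv_le_log_of_pos (x := 1 + q) (by linarith)
    refine le_trans ?_ this
    have : (1 + q)⁻¹ ≤ 1 - q + q ^ 2 := by
      rw [inv_le_iff_one_le_mul₀ (by linarith)]
      nlinarith [mul_nonneg q0 (sq_nonneg q)]
    linarith
  have lg0 : 0 ≤ Real.log (1 + q) := Real.log_nonneg (by linarith)
  have f1 := exp_taylor (a1 * x) (a1 * x') c1 (by positivity) (by positivity) c1n
  have f1' : a1 * x' - a1 * x = a1 * (x' - x) := by ring
  rw [f1'] at f1
  have f2 := rem3_mul a1 l (x' - x) a1n a1l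
  set w := (a1 - a0) * x - (c0 - c1) with hw
  have ez : -(a0 * x) - c0 = (-(a1 * x) - c1) + w := by rw [hw]; ring
  have z1n : -(a1 * x) - c1 ≤ 0 := by nlinarith [mul_nonneg a1n hx]
  have z0n : -(a1 * x) - c1 + w ≤ 0 := by rw [← ez]; nlinarith [mul_nonneg a0n hx]
  have s1 := exp_first _ w z1n z0n
  rw [← ez] at s1
  have wabs : |w| ≤ (2 * l ^ 2 + δ * l) * (h * (1 + x)) := by
    have b1 : (a1 - a0) * x ≤ 2 * l ^ 2 * h * x := by
      rw [hdiff]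
      have : a1 * a0 ≤ l * l := by gcongr
      have := mul_le_mul_of_nonneg_right this (mul_nonneg hh hx)
      linarith
    have b1' : 0 ≤ (a1 - a0) * x := by rw [hdiff]; positivity
    have b2 : c0 - c1 ≤ δ * l * h := by
      rw [hcd]
      calc δ / 2 * Real.log (1 + q) ≤ δ / 2 * (2 * l * h) := by
            apply mul_le_mul_of_nonneg_left _ (by linarith); linarith
        _ = _ := by ring
    have b2' : 0 ≤ c0 - c1 := by rw [hcd]; positivity
    have e1 : (2 * l ^ 2 + δ * l) * (h * (1 + x)) = 2 * l ^ 2 * h * x + δ * l * h + (2 * l^2 * h + δ * l * (h * x)) := by ring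
    have e2 : 0 ≤ 2 * l^2 * h + δ * l * (h * x) := by positivity
    have e3 : 0 ≤ 2 * l ^ 2 * h * x := by positivity
    have e4 : 0 ≤ δ * l * h := by positivity
    rw [abs_le, e1, hw]
    constructor <;> linarith
  have w2 : w ^ 2 ≤ (2 * l ^ 2 + δ * l) ^ 2 * (h ^ 2 * (1 + x) ^ 2) := by
    rw [← sq_abs]
    calc |w| ^ 2 ≤ ((2 * l ^ 2 + δ * l) * (h * (1 + x))) ^ 2 := by gcongr
      _ = _ := by ring
  have wd : |w - (2 * a1 ^ 2 * h * x - δ * a1 * h)| ≤ (4 * l ^ 3 + 2 * δ * l ^ 2) * (h ^ 2 * (1 + x) ^ 2) := by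
    have e : w - (2 * a1 ^ 2 * h * x - δ * a1 * h) =
       - (4 * a1 ^ 2 * a0 * (h ^ 2 * x)) + δ / 2 * (q - Real.log (1 + q)) := by
      rw [hw, hcd, hdiff, hq]
      have : a0 = a1 - 2 * a1 * a0 * h := by linarith
      linear_combination (2 * a1 * h * x) * this
    rw [e]
    have b1 : a1 ^ 2 * a0 ≤ l ^ 2 * l := by gcongr
    have b2 : 4 * a1 ^ 2 * a0 * (h ^ 2 * x) ≤ 4 * l ^ 3 * (h ^ 2 * x) := by
      have := mul_le_mul_of_nonneg_right b1 (show 0 ≤ h ^ 2 * x by positivity)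
      linarith
    have b3 : δ / 2 * (q - Real.log (1 + q)) ≤ 2 * δ * l ^ 2 * h ^ 2 := by
      have : q - Real.log (1 + q) ≤ (2 * l * h) ^ 2 := by
        have : q ^ 2 ≤ (2 * l * h) ^ 2 := by gcongr
        linarith
      calc _ ≤ δ / 2 * (2 * l * h) ^ 2 := by gcongr
        _ = _ := by ring
    have b2' : 0 ≤ 4 * a1 ^ 2 * a0 * (h ^ 2 * x) := by positivity
    have b3' : 0 ≤ δ / 2 * (q - Real.log (1 + q)) := mul_nonneg (by linarith) (by linarith)
    have g1 : 4 * l ^ 3 * (h ^ 2 * x) ≤ 4 * l ^ 3 * (h ^ 2 * (1 + x) ^ 2) := by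
      gcongr; nlinarith
    have g2 : 2 * δ * l ^ 2 * h ^ 2 ≤ 2 * δ * l ^ 2 * (h ^ 2 * (1 + x) ^ 2) := by
      have : h ^ 2 ≤ h ^ 2 * (1 + x) ^ 2 := by nlinarith [sq_nonneg h, mul_nonneg (sq_nonneg h) hx, mul_nonneg (sq_nonneg h) (mul_nonneg hx hx)]
      gcongr
    have g3 : 0 ≤ 4 * l ^ 3 * (h ^ 2 * (1 + x) ^ 2) := by positivity
    have g4 : 0 ≤ 2 * δ * l ^ 2 * (h ^ 2 * (1 + x) ^ 2) := by positivity
    rw [abs_le, add_mul]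
    constructor <;> linarith
  set E1 := Real.exp (-(a1 * x) - c1) with hE1
  have E1p : 0 < E1 := Real.exp_pos _
  have E1l : E1 ≤ 1 := Real.exp_le_one_iff.2 z1n
  have key : Real.exp (-(a1 * x') - c1) - Real.exp (-(a0 * x) - c0)
      - E1 * (-a1 * (x' - x - δ * h) + a1 ^ 2 / 2 * ((x' - x) ^ 2 - 4 * h * x))
      = (Real.exp (-(a1 * x') - c1) - E1 * (1 - a1 * (x' - x) + (a1 * (x' - x)) ^ 2 / 2))
        + (E1 - Real.exp (-(a0 * x) - c0) + w * E1)
        + (- E1 * (w - (2 * a1 ^ 2 * h * x - δ * a1 * h))) := by ring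
  rw [key]
  have t3 : |- E1 * (w - (2 * a1 ^ 2 * h * x - δ * a1 * h))| ≤ (4 * l ^ 3 + 2 * δ * l ^ 2) * (h ^ 2 * (1 + x) ^ 2) := by
    rw [abs_mul, abs_neg, abs_of_pos E1p]
    refine le_trans ?_ wd
    exact mul_le_of_le_one_left (abs_nonneg _) E1l
  refine (abs_add_three _ _ _).trans ?_
  linarith

namespace IsBESQ

variable {Ω : Type*} {m : MeasurableSpace Ω} {μ : Measure Ω} [IsProbabilityMeasure μ]
  {ℱ : Filtration ℝ m} {δ y : ℝ} {Y : ℝ → Ω → ℝ}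

/-- indicator that an increment is small -/
noncomputable def sm (ε d : ℝ) : ℝ := if |d| ≤ ε then 1 else 0

lemma sm_nonneg (ε d : ℝ) : 0 ≤ sm ε d := by unfold sm; split_ifs <;> norm_num
lemma sm_le_one (ε d : ℝ) : sm ε d ≤ 1 := by unfold sm; split_ifs <;> norm_num
lemma measurable_sm (ε : ℝ) : Measurable (sm ε) := by
  unfold sm
  exact Measurable.ite (measurableSet_le measurable_id.abs measurable_const) measurable_const measurable_const

/-- increments on the grid -/
noncomputable def inc (Y : ℝ → Ω → ℝ) (s h : ℝ) (k : ℕ) (ω : Ω) : ℝ :=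
  Y (s + (k + 1 : ℕ) * h) ω - Y (s + k * h) ω

noncomputable def gd (Y : ℝ → Ω → ℝ) (s h ε : ℝ) (k : ℕ) (ω : Ω) : ℝ :=
  ∏ j ∈ Finset.range k, sm ε (inc Y s h j ω)

lemma gd_nonneg (s h ε : ℝ) (k : ℕ) (ω : Ω) : 0 ≤ gd Y s h ε k ω :=
  Finset.prod_nonneg fun j _ => sm_nonneg _ _

lemma gd_succ (s h ε : ℝ) (k : ℕ) (ω : Ω) :
    gd Y s h ε (k + 1) ω = gd Y s h ε k ω * sm ε (inc Y s h k ω) := Finset.prod_range_succ _ _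

lemma gd_anti (s h ε : ℝ) (ω : Ω) : Antitone fun k => gd Y s h ε k ω := by
  refine antitone_nat_of_succ_le fun k => ?_
  rw [gd_succ]
  exact mul_le_of_le_one_right (gd_nonneg _ _ _ _ _) (sm_le_one _ _)

lemma gd_le_one (s h ε : ℝ) (k : ℕ) (ω : Ω) : gd Y s h ε k ω ≤ 1 := by
  have := gd_anti (Y := Y) s h ε ω (Nat.zero_le k)
  simpa [gd] using this

lemma inc_smeas (hY : IsBESQ μ ℱ δ y Y) {s h t : ℝ} {k : ℕ} (hh : 0 ≤ h) (ht : s + (k + 1 : ℕ) * h ≤ t) :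
    Measurable[ℱ t] (inc Y s h k) := by
  have h1 := hY.smeas ht
  have h2 : StronglyMeasurable[ℱ t] (Y (s + k * h)) :=
    hY.smeas (le_trans (by push_cast; nlinarith) ht)
  exact (h1.sub h2).measurable

lemma gd_smeas (hY : IsBESQ μ ℱ δ y Y) {s h : ℝ} (ε : ℝ) (hh : 0 ≤ h) (k : ℕ) :
    Measurable[ℱ (s + k * h)] (gd Y s h ε k) := by
  unfold gd
  refine Finset.measurable_fun_prod _ fun j hj => ?_
  refine (measurable_sm ε).comp (hY.inc_smeas hh ?_)
  have : (j + 1 : ℕ) ≤ k := Finset.mem_range.1 hj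
  have : ((j + 1 : ℕ) : ℝ) ≤ k := by exact_mod_cast this
  nlinarith

lemma gd_tendsto (hY : IsBESQ μ ℱ δ y Y) {s t ε : ℝ} (hst : s ≤ t) (hε : 0 < ε) (ω : Ω) :
    ∀ᶠ N : ℕ in atTop, gd Y s ((t - s) / N) ε N ω = 1 := by
  have huc : UniformContinuousOn (fun u => Y u ω) (Icc s t) :=
    isCompact_Icc.uniformContinuousOn_of_continuous (hY.cont ω).continuousOn
  rw [Metric.uniformContinuousOn_iff] at huc
  obtain ⟨η, hη, H⟩ := huc ε hε
  have hlim : Tendsto (fun N : ℕ => (t - s) / N) atTop (nhds 0) :=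
    tendsto_const_div_atTop_nhds_zero_nat _
  filter_upwards [hlim.eventually (gt_mem_nhds hη), eventually_gt_atTop 0] with N h1 h2
  have hN : (0:ℝ) < N := by exact_mod_cast h2
  have hh : 0 ≤ (t - s) / N := div_nonneg (by linarith) hN.le
  have hNh : N * ((t - s) / N) = t - s := by field_simp
  unfold gd
  apply Finset.prod_eq_one
  intro j hj
  have : (j + 1 : ℕ) ≤ N := Finset.mem_range.1 hj
  have hj1 : ((j + 1 : ℕ) : ℝ) ≤ N := by exact_mod_cast this
  have hj2 : ((j + 1 : ℕ) : ℝ) * ((t - s) / N) ≤ t - s := by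
    calc _ ≤ (N:ℝ) * ((t - s) / N) := by gcongr
      _ = t - s := hNh
  have hj0 : 0 ≤ (j:ℝ) * ((t - s) / N) := by positivity
  unfold sm
  rw [if_pos]
  push_cast at hj2
  have := H (s + (j + 1 : ℕ) * ((t - s) / N)) ⟨by push_cast; linarith, by push_cast; linarith⟩
    (s + j * ((t - s) / N)) ⟨by linarith, by linarith⟩ (by
      rw [Real.dist_eq]
      have e : s + (j + 1 : ℕ) * ((t - s) / N) - (s + j * ((t - s) / N)) = (t - s) / N := by push_cast; ring
      rw [e, abs_of_nonneg hh]; exact h1)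
  rw [Real.dist_eq] at this
  exact this.le

lemma inc_sq_integrable (hY : IsBESQ μ ℱ δ y Y) (s h : ℝ) (k : ℕ) :
    Integrable (fun ω => (inc Y s h k ω) ^ 2) μ :=
  ((hY.memLp _).sub (hY.memLp _)).integrable_sq

lemma inc_meas (hY : IsBESQ μ ℱ δ y Y) (s h : ℝ) (k : ℕ) : Measurable (inc Y s h k) :=
  (hY.meas _).sub (hY.meas _)

lemma rem_integrable (hY : IsBESQ μ ℱ δ y Y) (s h : ℝ) (k : ℕ) :
    Integrable (fun ω => rem3 (inc Y s h k ω)) μ := by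
  refine (hY.inc_sq_integrable s h k).mono' (measurable_rem3.comp (hY.inc_meas s h k)).aestronglyMeasurable
    (ae_of_all _ fun ω => ?_)
  rw [Real.norm_of_nonneg (rem3_nonneg _)]
  exact rem3_le_sq _

lemma sq_bound (hY : IsBESQ μ ℱ δ y Y) (hδ : 0 ≤ δ) {s t h : ℝ} (hs : 0 ≤ s) (hst : s ≤ t) (hh : 0 ≤ h)
    {k : ℕ} (hk : s + (k + 1 : ℕ) * h ≤ t) {V : Ω → ℝ} (hVi : Integrable V μ) (hV0 : ∀ ω, 0 ≤ V ω)
    (hV : ∀ᵐ ω ∂μ, ∀ u ∈ Icc 0 t, (Y u ω) ^ 2 ≤ V ω) {W W' : Ω → ℝ}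
    (hW : Measurable[ℱ (s + k * h)] W) (hW0 : ∀ ω, 0 ≤ W ω) (hW1 : ∀ ω, W ω ≤ 1)
    (hW' : Measurable W') (hWW' : ∀ ω, W ω ≤ W' ω) (hW'1 : ∀ ω, W' ω ≤ 1) :
    ∫ ω, W ω * (inc Y s h k ω) ^ 2 ∂μ ≤ (4 + (2 * δ + δ ^ 2) * t) * h * ∫ ω, W' ω * (1 + V ω) ∂μ := by
  have hkh : 0 ≤ (k:ℝ) * h := by positivity
  have e := hY.weak_sq (s := s + k * h) (t := s + (k + 1 : ℕ) * h) (by linarith)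
    (by push_cast; nlinarith) (W := W) (C := 1) hW.stronglyMeasurable
    (fun ω => by rw [abs_of_nonneg (hW0 ω)]; exact hW1 ω)
  have e2 : s + (k + 1 : ℕ) * h - (s + k * h) = h := by push_cast; ring
  rw [e2] at e
  push_cast at hk
  have hht : h ≤ t := by linarith
  have hWm : Measurable W := hW.mono (ℱ.le _) le_rfl
  have hiU : Integrable (fun ω => W' ω * (1 + V ω)) μ := by
    refine ((integrable_const 1).add hVi).bdd_mul (c := 1) hW'.aestronglyMeasurable (ae_of_all _ fun ω => ?_)
    rw [Real.norm_of_nonneg ((hW0 ω).trans (hWW' ω))]; exact hW'1 ω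
  have b1 : ∫ ω, W ω * Y (s + k * h) ω ∂μ ≤ ∫ ω, W' ω * (1 + V ω) ∂μ := by
    refine integral_mono_ae ?_ hiU ?_
    · refine (hY.integrable _).bdd_mul (c := 1) hWm.aestronglyMeasurable (ae_of_all _ fun ω => ?_)
      rw [Real.norm_of_nonneg (hW0 ω)]; exact hW1 ω
    · filter_upwards [hV] with ω hω
      have := hω (s + k * h) ⟨by linarith, by linarith⟩
      have h2 : Y (s + k * h) ω ≤ 1 + V ω := by nlinarith [sq_nonneg (Y (s + k * h) ω - 1)]
      exact mul_le_mul (hWW' ω) h2 (hY.nonneg _ _) ((hW0 ω).trans (hWW' ω))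
  have b2 : ∫ ω, W ω ∂μ ≤ ∫ ω, W' ω * (1 + V ω) ∂μ := by
    refine integral_mono_ae ?_ hiU (ae_of_all _ fun ω => ?_)
    · refine (integrable_const (1:ℝ)).mono' hWm.aestronglyMeasurable (ae_of_all _ fun ω => ?_)
      rw [Real.norm_of_nonneg (hW0 ω)]; exact hW1 ω
    · show W ω ≤ W' ω * (1 + V ω)
      nlinarith [hWW' ω, hV0 ω, hW0 ω, mul_nonneg ((hW0 ω).trans (hWW' ω)) (hV0 ω)]
  have b3 : 0 ≤ ∫ ω, W ω ∂μ := integral_nonneg hW0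
  have e3 : ∫ ω, W ω * (inc Y s h k ω) ^ 2 ∂μ = 4 * h * ∫ ω, W ω * Y (s + k * h) ω ∂μ
      + (2 * δ + δ ^ 2) * h ^ 2 * ∫ ω, W ω ∂μ := e
  rw [e3]
  set I := ∫ ω, W' ω * (1 + V ω) ∂μ
  have I0 : 0 ≤ I := b3.trans b2
  calc _ ≤ 4 * h * I + (2 * δ + δ ^ 2) * (h * t) * I := by
        have : h ^ 2 ≤ h * t := by nlinarith
        have ht0 : 0 ≤ t := hs.trans hst
        have : 0 ≤ (2 * δ + δ ^ 2) * (h * t) := by positivity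
        gcongr
    _ = _ := by ring

lemma lind (hY : IsBESQ μ ℱ δ y Y) (hδ : 0 ≤ δ) {s t : ℝ} (hs : 0 ≤ s) (hst : s < t) :
    Tendsto (fun N : ℕ => ∑ k ∈ Finset.range N, ∫ ω, rem3 (inc Y s ((t - s) / N) k ω) ∂μ) atTop (nhds 0) := by
  have ht : 0 < t := by linarith
  obtain ⟨V, hVi, hV0, -, hV⟩ := hY.exists_sup hδ ht
  set C := (4 + (2 * δ + δ ^ 2) * t) with hC
  have C0 : 0 ≤ C := by positivity
  set I := ∫ ω, (1 + V ω) ∂μ with hI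
  have I0 : 0 ≤ I := integral_nonneg fun ω => by have := hV0 ω; positivity
  have hUi : Integrable (fun ω => 1 + V ω) μ := (integrable_const 1).add hVi
  have key : ∀ ε, 0 < ε → ∀ N : ℕ, ∑ k ∈ Finset.range N, ∫ ω, rem3 (inc Y s ((t - s) / N) k ω) ∂μ
      ≤ ε * (C * t * I) + (1 + C * t) * ∫ ω, (1 - gd Y s ((t - s) / N) ε N ω) * (1 + V ω) ∂μ := by
    intro ε hε N
    set h := (t - s) / N with hh'
    have hh : 0 ≤ h := div_nonneg (by linarith) (Nat.cast_nonneg _)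
    have hNh : N * h ≤ t - s := by
      rcases Nat.eq_zero_or_pos N with h0 | h0
      · subst h0; simp; linarith
      · have : (0:ℝ) < N := by exact_mod_cast h0
        rw [hh']; field_simp; rfl
    have hNt : N * h ≤ t := by linarith
    set J := ∫ ω, (1 - gd Y s h ε N ω) * (1 + V ω) ∂μ with hJ
    have gm : ∀ k, Measurable (gd Y s h ε k) := fun k => (hY.gd_smeas ε hh k).mono (ℱ.le _) le_rfl
    have J0 : 0 ≤ J := integral_nonneg fun ω =>
      mul_nonneg (sub_nonneg.2 (gd_le_one _ _ _ _ _)) (by have := hV0 ω; positivity)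
    have hkt : ∀ k ∈ Finset.range N, s + (k + 1 : ℕ) * h ≤ t := by
      intro k hk
      have : (k + 1 : ℕ) ≤ N := Finset.mem_range.1 hk
      have : ((k + 1 : ℕ) : ℝ) ≤ N := by exact_mod_cast this
      nlinarith
    have hbi : ∀ {f g : Ω → ℝ}, Integrable g μ → Measurable f → (∀ ω, 0 ≤ f ω) → (∀ ω, f ω ≤ 1) →
        Integrable (fun ω => f ω * g ω) μ := fun hg hf h0 h1 =>
      hg.bdd_mul (c := 1) hf.aestronglyMeasurable (ae_of_all _ fun ω => by
        rw [Real.norm_of_nonneg (h0 ω)]; exact h1 ω)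
    have iJ : Integrable (fun ω => (1 - gd Y s h ε N ω) * (1 + V ω)) μ :=
      hbi hUi (measurable_const.sub (gm N)) (fun ω => sub_nonneg.2 (gd_le_one _ _ _ _ _))
        (fun ω => by linarith [gd_nonneg (Y := Y) s h ε N ω])
    have igk : ∀ k, Integrable (fun ω => gd Y s h ε k ω * V ω) μ := fun k => hbi hVi (gm k)
      (gd_nonneg _ _ _ _) (gd_le_one _ _ _ _)
    have iqk : ∀ k, Integrable (fun ω => (1 - gd Y s h ε k ω) * (inc Y s h k ω) ^ 2) μ := fun k =>
      hbi (hY.inc_sq_integrable s h k) (measurable_const.sub (gm k))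
        (fun ω => sub_nonneg.2 (gd_le_one _ _ _ _ _))
        (fun ω => by linarith [gd_nonneg (Y := Y) s h ε k ω])
    have step : ∀ k ∈ Finset.range N, ∫ ω, rem3 (inc Y s h k ω) ∂μ ≤
        ε * (C * h * I) + (∫ ω, gd Y s h ε k ω * V ω ∂μ - ∫ ω, gd Y s h ε (k+1) ω * V ω ∂μ) + C * h * J := by
      intro k hk
      have i1 := (hY.inc_sq_integrable s h k).const_mul ε
      have p1 : ∫ ω, rem3 (inc Y s h k ω) ∂μ ≤ ∫ ω, (ε * (inc Y s h k ω) ^ 2 +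
          (gd Y s h ε k ω * V ω - gd Y s h ε (k+1) ω * V ω) + (1 - gd Y s h ε k ω) * (inc Y s h k ω) ^ 2) ∂μ := by
        refine integral_mono_ae (hY.rem_integrable s h k)
          ((i1.add ((igk k).sub (igk (k+1)))).add (iqk k)) ?_
        filter_upwards [hV] with ω hω
        have hk2 := hkt k hk
        have hkh : 0 ≤ (k:ℝ) * h := by positivity
        push_cast at hk2
        have v1 := hω (s + k * h) ⟨by linarith, by linarith⟩
        have v2 := hω (s + (k + 1 : ℕ) * h) ⟨by push_cast; linarith, by push_cast; linarith⟩
        have vd : (inc Y s h k ω) ^ 2 ≤ V ω := by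
          unfold inc
          nlinarith [mul_nonneg (hY.nonneg (s + (k + 1 : ℕ) * h) ω) (hY.nonneg (s + k * h) ω), hY.nonneg (s + (k + 1 : ℕ) * h) ω, hY.nonneg (s + k * h) ω, le_total (Y (s + (k + 1 : ℕ) * h) ω) (Y (s + k * h) ω)]
        have g0 := gd_nonneg (Y := Y) s h ε k ω
        have g1 := gd_le_one (Y := Y) s h ε k ω
        have d0 := sq_nonneg (inc Y s h k ω)
        rw [gd_succ]
        by_cases hc : |inc Y s h k ω| ≤ ε
        · have : sm ε (inc Y s h k ω) = 1 := if_pos hc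
          rw [this]
          have : rem3 (inc Y s h k ω) ≤ ε * (inc Y s h k ω) ^ 2 := by
            unfold rem3
            rw [mul_comm ε]
            exact mul_le_mul_of_nonneg_left ((min_le_right _ _).trans hc) d0
          nlinarith
        · have : sm ε (inc Y s h k ω) = 0 := if_neg hc
          rw [this]
          have := rem3_le_sq (inc Y s h k ω)
          nlinarith
      rw [integral_add ?_ (iqk k), integral_add i1 ?_, integral_sub (igk k) (igk (k+1)), integral_const_mul] at p1
      rotate_left
      · exact (igk k).sub (igk (k+1))
      · exact i1.add ((igk k).sub (igk (k+1)))
      have p2 : ∫ ω, (inc Y s h k ω) ^ 2 ∂μ ≤ C * h * I := by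
        have := hY.sq_bound hδ hs hst.le hh (hkt k hk) hVi hV0 hV (W := fun _ => 1) (W' := fun _ => 1)
          measurable_const (by simp) (by simp) measurable_const (by simp) (by simp)
        simpa using this
      have p3 : ∫ ω, (1 - gd Y s h ε k ω) * (inc Y s h k ω) ^ 2 ∂μ ≤ C * h * J := by
        refine hY.sq_bound hδ hs hst.le hh (hkt k hk) hVi hV0 hV (W := fun ω => 1 - gd Y s h ε k ω)
          (W' := fun ω => 1 - gd Y s h ε N ω)
          (measurable_const.sub (hY.gd_smeas ε hh k)) (fun ω => sub_nonneg.2 (gd_le_one _ _ _ _ _))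
          (fun ω => by linarith [gd_nonneg (Y := Y) s h ε k ω]) (measurable_const.sub (gm N)) ?_
          (fun ω => by linarith [gd_nonneg (Y := Y) s h ε N ω])
        intro ω
        have := gd_anti (Y := Y) s h ε ω (Finset.mem_range.1 hk).le
        simp only at this
        linarith
      have := mul_le_mul_of_nonneg_left p2 hε.le
      linarith
    refine (Finset.sum_le_sum step).trans ?_
    rw [Finset.sum_add_distrib, Finset.sum_add_distrib, Finset.sum_range_sub' (fun k => ∫ ω, gd Y s h ε k ω * V ω ∂μ)]
    simp only [Finset.sum_const, Finset.card_range, nsmul_eq_mul]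
    have q1 : ∫ ω, gd Y s h ε 0 ω * V ω ∂μ - ∫ ω, gd Y s h ε N ω * V ω ∂μ ≤ J := by
      rw [← integral_sub (igk 0) (igk N)]
      refine integral_mono ((igk 0).sub (igk N)) iJ fun ω => ?_
      have := hV0 ω
      have := gd_le_one (Y := Y) s h ε N ω
      simp [gd] at this ⊢
      nlinarith
    have q2 : N * (ε * (C * h * I)) ≤ ε * (C * t * I) := by
      calc _ = ε * (C * (N * h) * I) := by ring
        _ ≤ _ := by gcongr
    have q3 : N * (C * h * J) ≤ C * t * J := by
      calc _ = C * (N * h) * J := by ring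
        _ ≤ _ := by gcongr
    linarith
  have lim : ∀ ε, 0 < ε → Tendsto (fun N : ℕ => ∫ ω, (1 - gd Y s ((t - s) / N) ε N ω) * (1 + V ω) ∂μ) atTop (nhds 0) := by
    intro ε hε
    have : Tendsto (fun N : ℕ => ∫ ω, (1 - gd Y s ((t - s) / N) ε N ω) * (1 + V ω) ∂μ) atTop (nhds (∫ ω, (0:ℝ) ∂μ)) := by
      refine tendsto_integral_of_dominated_convergence (fun ω => 1 + V ω) ?_ hUi ?_ ?_
      · intro N
        have hh : 0 ≤ (t - s) / N := div_nonneg (by linarith) (Nat.cast_nonneg _)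
        exact (measurable_const.sub ((hY.gd_smeas ε hh N).mono (ℱ.le _) le_rfl)).aestronglyMeasurable.mul hUi.aestronglyMeasurable
      · intro N
        refine ae_of_all _ fun ω => ?_
        have h1 := gd_le_one (Y := Y) s ((t - s) / N) ε N ω
        have h2 := gd_nonneg (Y := Y) s ((t - s) / N) ε N ω
        have := hV0 ω
        rw [Real.norm_of_nonneg (mul_nonneg (by linarith) (by linarith))]
        exact mul_le_of_le_one_left (by linarith) (by linarith)
      · refine ae_of_all _ fun ω => ?_
        refine tendsto_const_nhds.congr' ?_
        filter_upwards [hY.gd_tendsto hst.le hε ω] with N hN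
        rw [hN]; ring
    simpa using this
  rw [Metric.tendsto_atTop]
  intro r hr
  obtain ⟨ε, hε, hεr⟩ : ∃ ε : ℝ, 0 < ε ∧ ε * (C * t * I) < r / 2 := by
    refine ⟨r / 2 / (C * t * I + 1), by positivity, ?_⟩
    rw [div_mul_eq_mul_div, div_lt_iff₀ (by positivity)]
    nlinarith [mul_nonneg (mul_nonneg C0 ht.le) I0]
  have l2 := (lim ε hε).const_mul (1 + C * t)
  rw [mul_zero] at l2
  obtain ⟨N0, hN0⟩ := eventually_atTop.1 (l2.eventually (gt_mem_nhds (half_pos hr)))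
  refine ⟨N0, fun N hN => ?_⟩
  have h1 := key ε hε N
  have h2 := hN0 N hN
  have h3 : 0 ≤ ∑ k ∈ Finset.range N, ∫ ω, rem3 (inc Y s ((t - s) / N) k ω) ∂μ :=
    Finset.sum_nonneg fun k _ => integral_nonneg fun ω => rem3_nonneg _
  rw [Real.dist_eq, sub_zero, abs_of_nonneg h3]
  linarith

end IsBESQ

namespace IsBESQ

variable {Ω : Type*} {m : MeasurableSpace Ω} {μ : Measure Ω} [IsProbabilityMeasure μ]
  {ℱ : Filtration ℝ m} {δ y : ℝ} {Y : ℝ → Ω → ℝ}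

lemma bmul {f g : Ω → ℝ} {C : ℝ} (hg : Integrable g μ) (hf : Measurable f) (h : ∀ ω, |f ω| ≤ C) :
    Integrable (fun ω => f ω * g ω) μ :=
  hg.bdd_mul (c := C) hf.aestronglyMeasurable (ae_of_all _ h)

lemma exp_arg_le {l D x c : ℝ} (hl : 0 ≤ l) (hδ : 0 ≤ δ) (hD : 1 ≤ D) (hx : 0 ≤ x) :
    |Real.exp (-(l / D * x) - δ / 2 * Real.log D)| ≤ 1 := by
  rw [abs_of_pos (Real.exp_pos _), Real.exp_le_one_iff]
  have := Real.log_nonneg hD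
  have : 0 ≤ l / D * x := by positivity
  have : 0 ≤ δ / 2 * Real.log D := by positivity
  linarith

lemma lap_step (hY : IsBESQ μ ℱ δ y Y) (hδ : 0 ≤ δ) {u h l D C : ℝ} (hu : 0 ≤ u) (hh : 0 ≤ h)
    (hl : 0 ≤ l) (hD : 1 ≤ D) {W : Ω → ℝ} (hW : Measurable[ℱ u] W) (hC : ∀ ω, |W ω| ≤ C) :
    |∫ ω, W ω * Real.exp (-(l / D * Y (u + h) ω) - δ / 2 * Real.log D) ∂μ
      - ∫ ω, W ω * Real.exp (-(l / (D + 2 * l * h) * Y u ω) - δ / 2 * Real.log (D + 2 * l * h)) ∂μ|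
    ≤ C * (4 * (l^2*(1+l)) * ∫ ω, rem3 (Y (u + h) ω - Y u ω) ∂μ
      + h ^ 2 * (((2*l^2+δ*l)^2+4*l^3+2*δ*l^2) * ∫ ω, (1 + Y u ω) ^ 2 ∂μ + l ^ 2 * (2 * δ + δ ^ 2))) := by
  obtain ⟨ω0⟩ : Nonempty Ω := by
    by_contra hne
    rw [not_nonempty_iff] at hne
    have := measure_univ (μ := μ)
    simp [Set.eq_empty_of_isEmpty] at this
  have C0 : 0 ≤ C := (abs_nonneg _).trans (hC ω0)
  have hWm : Measurable W := hW.mono (ℱ.le _) le_rfl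
  have hD2 : 1 ≤ D + 2 * l * h := by have : 0 ≤ 2 * l * h := by positivity
                                     linarith
  set W' : Ω → ℝ := fun ω => W ω * Real.exp (-(l / D * Y u ω) - δ / 2 * Real.log D) with hW'
  have hYu : Measurable[ℱ u] (Y u) := (hY.smeas le_rfl).measurable
  have hW'm : Measurable[ℱ u] W' := by
    refine hW.mul (Real.measurable_exp.comp ?_)
    exact ((hYu.const_mul _).neg).sub measurable_const
  have hW'C : ∀ ω, |W' ω| ≤ C := fun ω => by
    rw [hW', abs_mul]
    exact (mul_le_mul (hC ω) (exp_arg_le (c := 0) hl hδ hD (hY.nonneg _ _)) (abs_nonneg _) C0).trans (by simp)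
  have hW'm2 : Measurable W' := hW'm.mono (ℱ.le _) le_rfl
  have hW'L : MemLp W' 2 μ := MemLp.of_bound hW'm2.aestronglyMeasurable C (ae_of_all _ hW'C)
  have e1 := hY.weak_mart hu (by linarith : u ≤ u + h) hW'm.stronglyMeasurable hW'L
  have e2 := hY.weak_sq hu (by linarith : u ≤ u + h) hW'm.stronglyMeasurable hW'C
  rw [add_sub_cancel_left] at e1 e2
  have iW' : Integrable W' μ := hW'L.integrable (by norm_num)
  have i1 : Integrable (fun ω => W' ω * Y (u + h) ω) μ := bmul (hY.integrable _) hW'm2 hW'C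
  have i2 : Integrable (fun ω => W' ω * Y u ω) μ := bmul (hY.integrable _) hW'm2 hW'C
  have hsq : Integrable (fun ω => (Y (u + h) ω - Y u ω) ^ 2) μ := ((hY.memLp _).sub (hY.memLp _)).integrable_sq
  have i3 : Integrable (fun ω => W' ω * (Y (u + h) ω - Y u ω) ^ 2) μ := bmul hsq hW'm2 hW'C
  have hem : ∀ D v, Measurable (fun ω => Real.exp (-(l / D * Y v ω) - δ / 2 * Real.log D)) := fun D v =>
    Real.measurable_exp.comp ((((hY.meas v).const_mul _).neg).sub measurable_const)
  have ie : ∀ D v, 1 ≤ D → Integrable (fun ω => W ω * Real.exp (-(l / D * Y v ω) - δ / 2 * Real.log D)) μ := by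
    intro D v hD
    refine bmul ?_ hWm hC
    exact (integrable_const (1:ℝ)).mono' (hem D v).aestronglyMeasurable
      (ae_of_all _ fun ω => exp_arg_le (c := 0) hl hδ hD (hY.nonneg _ _))
  have irem : Integrable (fun ω => rem3 (Y (u + h) ω - Y u ω)) μ := by
    refine hsq.mono' (measurable_rem3.comp ((hY.meas _).sub (hY.meas _))).aestronglyMeasurable
      (ae_of_all _ fun ω => ?_)
    rw [Real.norm_of_nonneg (rem3_nonneg _)]
    exact rem3_le_sq _
  have iY : Integrable (fun ω => (1 + Y u ω) ^ 2) μ := ((memLp_const (1:ℝ)).add (hY.memLp u)).integrable_sq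
  set a := l / D with ha
  have a0 : 0 ≤ a := by positivity
  have al : a ≤ l := div_le_self hl hD
  have iE : Integrable (fun ω => W' ω * (-a * (Y (u + h) ω - Y u ω - δ * h)
      + a^2/2 * ((Y (u + h) ω - Y u ω)^2 - 4 * h * Y u ω))) μ := by
    have := (((i1.sub i2).sub (iW'.mul_const (δ * h))).const_mul (-a)).add ((i3.sub (i2.const_mul (4*h))).const_mul (a^2/2))
    refine this.congr (ae_of_all _ fun ω => ?_)
    simp only [Pi.add_apply, Pi.sub_apply]
    ring
  have eE : ∫ ω, W' ω * (-a * (Y (u + h) ω - Y u ω - δ * h)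
      + a^2/2 * ((Y (u + h) ω - Y u ω)^2 - 4 * h * Y u ω)) ∂μ = a^2/2 * ((2 * δ + δ ^ 2) * h ^ 2 * ∫ ω, W' ω ∂μ) := by
    have : ∀ ω, W' ω * (-a * (Y (u + h) ω - Y u ω - δ * h)
      + a^2/2 * ((Y (u + h) ω - Y u ω)^2 - 4 * h * Y u ω)) =
      (-a) * (W' ω * Y (u + h) ω - W' ω * Y u ω - W' ω * (δ * h)) +
      a^2/2 * (W' ω * (Y (u + h) ω - Y u ω)^2 - 4 * h * (W' ω * Y u ω)) := fun ω => by ring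
    simp_rw [this]
    rw [integral_add ?_ ?_, integral_const_mul, integral_const_mul, integral_sub ?_ ?_, integral_sub i1 i2,
      integral_sub i3 ?_, integral_mul_const, integral_const_mul, e1, e2]
    · ring
    · exact i2.const_mul _
    · exact i1.sub i2
    · exact iW'.mul_const _
    · exact ((i1.sub i2).sub (iW'.mul_const (δ * h))).const_mul (-a)
    · exact (i3.sub (i2.const_mul (4*h))).const_mul (a^2/2)
  have bW' : |∫ ω, W' ω ∂μ| ≤ C := by
    have := norm_integral_le_of_norm_le_const (μ := μ) (f := W') (C := C) (ae_of_all _ hW'C)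
    simpa using this
  have bE : |a^2/2 * ((2 * δ + δ ^ 2) * h ^ 2 * ∫ ω, W' ω ∂μ)| ≤ C * (h ^ 2 * (l ^ 2 * (2 * δ + δ ^ 2))) := by
    rw [abs_mul, abs_mul, abs_of_nonneg (by positivity : 0 ≤ a^2/2),
      abs_of_nonneg (by positivity : 0 ≤ (2 * δ + δ ^ 2) * h ^ 2)]
    calc _ ≤ l ^ 2 * ((2 * δ + δ ^ 2) * h ^ 2 * C) := by
          gcongr
          nlinarith
      _ = _ := by ring
  set K := ((2*l^2+δ*l)^2+4*l^3+2*δ*l^2) with hK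
  have rem : |∫ ω, W ω * Real.exp (-(l / D * Y (u + h) ω) - δ / 2 * Real.log D) ∂μ
      - ∫ ω, W ω * Real.exp (-(l / (D + 2 * l * h) * Y u ω) - δ / 2 * Real.log (D + 2 * l * h)) ∂μ
      - ∫ ω, W' ω * (-a * (Y (u + h) ω - Y u ω - δ * h)
      + a^2/2 * ((Y (u + h) ω - Y u ω)^2 - 4 * h * Y u ω)) ∂μ| ≤
      ∫ ω, C * (4 * (l^2*(1+l)) * rem3 (Y (u + h) ω - Y u ω) + K * (h ^ 2 * (1 + Y u ω) ^ 2)) ∂μ := by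
    rw [← integral_sub (ie _ _ hD) (ie _ _ hD2), ← integral_sub ?_ iE]
    · rw [← Real.norm_eq_abs]
      refine norm_integral_le_of_norm_le ?_ (ae_of_all _ fun ω => ?_)
      · exact ((irem.const_mul _).add ((iY.const_mul _).const_mul _)).const_mul _
      · have := step_bound l δ D h (Y u ω) (Y (u + h) ω) hl hδ hD hh (hY.nonneg _ _) (hY.nonneg _ _)
        rw [Real.norm_eq_abs]
        refine le_trans (le_of_eq ?_) (mul_le_mul (hC ω) this (abs_nonneg _) C0)
        rw [← abs_mul]
        congr 1
        simp only [hW']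
        ring
    · exact (ie _ _ hD).sub (ie _ _ hD2)
  rw [eE, integral_const_mul, integral_add (irem.const_mul _) ((iY.const_mul _).const_mul _),
    integral_const_mul, integral_const_mul, integral_const_mul] at rem
  have := abs_le.1 rem
  have := abs_le.1 bE
  rw [abs_le]
  constructor <;> nlinarith

set_option maxHeartbeats 1000000 in
lemma laplace_step (hY : IsBESQ μ ℱ δ y Y) (hδ : 0 ≤ δ) {s t l C : ℝ} (hs : 0 ≤ s) (hst : s ≤ t)
    (hl : 0 ≤ l) {W : Ω → ℝ} (hW : Measurable[ℱ s] W) (hC : ∀ ω, |W ω| ≤ C) :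
    ∫ ω, W ω * Real.exp (-(l * Y t ω)) ∂μ =
    ∫ ω, W ω * Real.exp (-(l / (1 + 2 * l * (t - s)) * Y s ω) - δ / 2 * Real.log (1 + 2 * l * (t - s))) ∂μ := by
  rcases hst.eq_or_lt with rfl | hst'
  · simp
  have ht : 0 < t := by linarith
  obtain ⟨V, hVi, hV0, -, hV⟩ := hY.exists_sup hδ ht
  have hlind := hY.lind hδ hs hst'
  have C0 : 0 ≤ C := by
    obtain ⟨ω0⟩ : Nonempty Ω := by
      by_contra hne
      rw [not_nonempty_iff] at hne
      have := measure_univ (μ := μ)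
      simp [Set.eq_empty_of_isEmpty] at this
    exact (abs_nonneg _).trans (hC ω0)
  set I := ∫ ω, (2 + 2 * V ω) ∂μ with hI
  set K := ((2*l^2+δ*l)^2+4*l^3+2*δ*l^2) with hK
  have hK0 : 0 ≤ K := by positivity
  set M := C * (K * I + l ^ 2 * (2 * δ + δ ^ 2)) * (t - s) ^ 2 with hM
  set A := ∫ ω, W ω * Real.exp (-(l * Y t ω)) ∂μ -
    ∫ ω, W ω * Real.exp (-(l / (1 + 2 * l * (t - s)) * Y s ω) - δ / 2 * Real.log (1 + 2 * l * (t - s))) ∂μ with hA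
  have key : ∀ N : ℕ, 0 < N → |A| ≤ C * (4 * (l^2*(1+l))) * (∑ k ∈ Finset.range N, ∫ ω, rem3 (inc Y s ((t - s) / N) k ω) ∂μ)
      + M / N := by
    intro N hN0
    have hN : (0:ℝ) < N := by exact_mod_cast hN0
    set h := (t - s) / N with hh'
    have hh : 0 ≤ h := div_nonneg (by linarith) hN.le
    have hNh : N * h = t - s := by rw [hh']; field_simp
    set a : ℕ → ℝ := fun k => ∫ ω, W ω * Real.exp (-(l / (1 + 2 * l * (t - (s + k * h))) * Y (s + k * h) ω)
      - δ / 2 * Real.log (1 + 2 * l * (t - (s + k * h)))) ∂μ with ha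
    have a0 : a 0 = ∫ ω, W ω * Real.exp (-(l / (1 + 2 * l * (t - s)) * Y s ω) - δ / 2 * Real.log (1 + 2 * l * (t - s))) ∂μ := by
      simp [ha]
    have aN : a N = ∫ ω, W ω * Real.exp (-(l * Y t ω)) ∂μ := by
      have : s + N * h = t := by linarith
      simp [ha, this]
    rw [hA, ← a0, ← aN, ← Finset.sum_range_sub]
    have st : ∀ k ∈ Finset.range N, |a (k + 1) - a k| ≤ C * (4 * (l^2*(1+l))) * ∫ ω, rem3 (inc Y s h k ω) ∂μ
        + C * (K * I + l ^ 2 * (2 * δ + δ ^ 2)) * h ^ 2 := by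
      intro k hk
      have hk1 : (k + 1 : ℕ) ≤ N := Finset.mem_range.1 hk
      have hk1 : ((k + 1 : ℕ) : ℝ) ≤ N := by exact_mod_cast hk1
      have hk2 : s + (k + 1 : ℕ) * h ≤ t := by nlinarith
      push_cast at hk2
      have hkh : 0 ≤ (k:ℝ) * h := by positivity
      have hD : 1 ≤ 1 + 2 * l * (t - (s + (k + 1 : ℕ) * h)) := by
        push_cast
        have : 0 ≤ 2 * l * (t - (s + (k + 1) * h)) := by
          apply mul_nonneg (by positivity); linarith
        linarith
      have := hY.lap_step hδ (u := s + k * h) (h := h) (by linarith) hh hl hD (W := W) (C := C)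
        (hW.mono (ℱ.mono (by linarith)) le_rfl) hC
      have ee : s + (k:ℝ) * h + h = s + (k + 1 : ℕ) * h := by push_cast; ring
      have ed : 1 + 2 * l * (t - (s + (k + 1 : ℕ) * h)) + 2 * l * h = 1 + 2 * l * (t - (s + k * h)) := by
        push_cast; ring
      rw [ee, ed] at this
      have b : ∫ ω, (1 + Y (s + k * h) ω) ^ 2 ∂μ ≤ I := by
        refine integral_mono_ae ((memLp_const (1:ℝ)).add (hY.memLp _)).integrable_sq
          ((integrable_const _).add (hVi.const_mul _)) ?_
        filter_upwards [hV] with ω hω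
        have := hω (s + k * h) ⟨by linarith, by linarith⟩
        nlinarith [sq_nonneg (Y (s + k * h) ω - 1)]
      refine this.trans ?_
      have b2 : C * (h ^ 2 * (K * ∫ ω, (1 + Y (s + k * h) ω) ^ 2 ∂μ)) ≤ C * (h ^ 2 * (K * I)) := by gcongr
      have : ∫ ω, rem3 (Y (s + (k + 1 : ℕ) * h) ω - Y (s + k * h) ω) ∂μ = ∫ ω, rem3 (inc Y s h k ω) ∂μ := rfl
      rw [this]
      linarith
    refine (Finset.abs_sum_le_sum_abs _ _).trans ((Finset.sum_le_sum st).trans ?_)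
    rw [Finset.sum_add_distrib, ← Finset.mul_sum]
    simp only [Finset.sum_const, Finset.card_range, nsmul_eq_mul]
    have : (N:ℝ) * (C * (K * I + l ^ 2 * (2 * δ + δ ^ 2)) * h ^ 2) = M / N := by
      rw [hM, hh']; field_simp
    rw [this]
  have lim : Tendsto (fun N : ℕ => C * (4 * (l^2*(1+l))) * (∑ k ∈ Finset.range N, ∫ ω, rem3 (inc Y s ((t - s) / N) k ω) ∂μ)
      + M / N) atTop (nhds 0) := by
    have := (hlind.const_mul (C * (4 * (l^2*(1+l))))).add (tendsto_const_div_atTop_nhds_zero_nat M)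
    simpa using this
  have : |A| ≤ 0 := by
    refine ge_of_tendsto lim ?_
    filter_upwards [eventually_gt_atTop 0] with N hN using key N hN
  have : A = 0 := abs_eq_zero.1 (le_antisymm this (abs_nonneg _))
  linarith

end IsBESQ

namespace IsBESQ

/-- The joint Laplace transform is `c * exp (- a z)`. -/
def LapEq {Ω : Type*} {m : MeasurableSpace Ω} (μ : Measure Ω) (δ : ℝ) (S : Finset ℝ) (l : ℝ → ℝ)
    (a c : ℝ) : Prop :=
  ∀ (ℱ : Filtration ℝ m) (z : ℝ) (Z : ℝ → Ω → ℝ), IsBESQ μ ℱ δ z Z →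
    ∫ ω, Real.exp (-∑ s ∈ S, l s * Z s ω) ∂μ = c * Real.exp (-(a * z))

variable {Ω : Type*} {m : MeasurableSpace Ω} {μ : Measure Ω} [IsProbabilityMeasure μ]
  {ℱ : Filtration ℝ m} {δ y : ℝ} {Y : ℝ → Ω → ℝ}

lemma lapEq_empty (l : ℝ → ℝ) : LapEq μ δ ∅ l 0 1 := by
  intro ℱ z Z hZ
  simp

lemma lapEq_single (hδ : 0 ≤ δ) (l : ℝ → ℝ) (hl : ∀ s, 0 ≤ l s) {t : ℝ} (ht : 0 ≤ t) :
    LapEq μ δ {t} l (l t / (1 + 2 * l t * (t - 0))) (Real.exp (- (δ / 2 * Real.log (1 + 2 * l t * (t - 0))))) := by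
  intro ℱ z Z hZ
  have := hZ.laplace_step hδ le_rfl ht (hl t) (W := fun _ => 1) (C := 1) measurable_const (by simp)
  simp only [one_mul] at this
  simp only [Finset.sum_singleton]
  rw [this]
  simp only [hZ.init]
  rw [integral_const, ← Real.exp_add]
  simp
  ring_nf

lemma lapEq_insert (hδ : 0 ≤ δ) (S : Finset ℝ) (hS : ∀ s ∈ S, 0 ≤ s) (l : ℝ → ℝ) (hl : ∀ s, 0 ≤ l s) {t r : ℝ}
    (hr : r ∈ S) (hrS : ∀ s ∈ S, s ≤ r) (hrt : r < t) {a c : ℝ}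
    (h : LapEq μ δ S (fun s => l s + if s = r then l t / (1 + 2 * l t * (t - r)) else 0) a c) :
    LapEq μ δ (insert t S) l a (c * Real.exp (- (δ / 2 * Real.log (1 + 2 * l t * (t - r))))) := by
  intro ℱ z Z hZ
  have htS : t ∉ S := fun h => absurd (hrS t h) (not_le.2 hrt)
  have hWm : Measurable[ℱ r] (fun ω => Real.exp (-∑ s ∈ S, l s * Z s ω)) := by
    refine Real.measurable_exp.comp (Measurable.neg ?_)
    refine Finset.measurable_fun_sum _ fun s hs => ?_
    exact (hZ.smeas (hrS s hs)).measurable.const_mul _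
  have hWb : ∀ ω, |Real.exp (-∑ s ∈ S, l s * Z s ω)| ≤ 1 := fun ω => by
    rw [abs_of_pos (Real.exp_pos _), Real.exp_le_one_iff, neg_nonpos]
    exact Finset.sum_nonneg fun s _ => mul_nonneg (hl s) (hZ.nonneg _ _)
  have := hZ.laplace_step hδ (hS r hr) hrt.le (hl t) hWm hWb
  have e1 : ∀ ω, Real.exp (-∑ s ∈ insert t S, l s * Z s ω) =
      Real.exp (-∑ s ∈ S, l s * Z s ω) * Real.exp (-(l t * Z t ω)) := fun ω => by
    rw [Finset.sum_insert htS, ← Real.exp_add]; congr 1; ring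
  simp_rw [e1]
  rw [this, mul_right_comm c, ← h ℱ z Z hZ, ← integral_mul_const]
  refine integral_congr_ae (ae_of_all _ fun ω => ?_)
  simp only
  rw [← Real.exp_add, ← Real.exp_add]
  congr 1
  simp only [add_mul, Finset.sum_add_distrib, ite_mul, zero_mul, Finset.sum_ite_eq', hr, if_true]
  ring

lemma lapEq_exists {Ω' : Type*} {m' : MeasurableSpace Ω'} (μ : Measure Ω) [IsProbabilityMeasure μ]
    (μ' : Measure Ω') [IsProbabilityMeasure μ'] (hδ : 0 ≤ δ) (S : Finset ℝ) :
    ∀ (hS : ∀ s ∈ S, 0 ≤ s) (l : ℝ → ℝ) (hl : ∀ s, 0 ≤ l s), ∃ a c, LapEq μ δ S l a c ∧ LapEq μ' δ S l a c := by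
  induction S using Finset.induction_on_max with
  | empty => exact fun _ l _ => ⟨0, 1, lapEq_empty l, lapEq_empty l⟩
  | insert t S hlt ih =>
    intro hS l hl
    have hS' : ∀ s ∈ S, 0 ≤ s := fun s hs => hS s (Finset.mem_insert_of_mem hs)
    have ht := hS t (Finset.mem_insert_self _ _)
    rcases S.eq_empty_or_nonempty with rfl | hne
    · exact ⟨_, _, lapEq_single hδ l hl ht, lapEq_single hδ l hl ht⟩
    · have hr := S.max'_mem hne
      have hrt := hlt _ hr
      have hrS : ∀ s ∈ S, s ≤ S.max' hne := fun s hs => S.le_max' s hs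
      obtain ⟨a, c, h1, h2⟩ := ih hS' (fun s => l s + if s = S.max' hne then l t / (1 + 2 * l t * (t - S.max' hne)) else 0)
        (fun s => by
          have := hl s
          have := hl t
          have : 0 < t - S.max' hne := by linarith
          split_ifs <;> positivity)
      exact ⟨_, _, lapEq_insert hδ S hS' l hl hr hrS hrt h1, lapEq_insert hδ S hS' l hl hr hrS hrt h2⟩

lemma lap_tuple {Ω' : Type*} {m' : MeasurableSpace Ω'} (μ : Measure Ω) [IsProbabilityMeasure μ]
    (μ' : Measure Ω') [IsProbabilityMeasure μ'] (hδ : 0 ≤ δ) {ι : Type*} [Fintype ι] (s : ι → ℝ) (n : ι → ℝ)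
    (hs : ∀ i, 0 ≤ s i) (hn : ∀ i, 0 ≤ n i) : ∃ a c : ℝ,
    (∀ (ℱ : Filtration ℝ m) (z : ℝ) (Z : ℝ → Ω → ℝ), IsBESQ μ ℱ δ z Z →
      ∫ ω, Real.exp (-∑ i, n i * Z (s i) ω) ∂μ = c * Real.exp (-(a * z))) ∧
    (∀ (ℱ : Filtration ℝ m') (z : ℝ) (Z : ℝ → Ω' → ℝ), IsBESQ μ' ℱ δ z Z →
      ∫ ω, Real.exp (-∑ i, n i * Z (s i) ω) ∂μ' = c * Real.exp (-(a * z))) := by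
  classical
  obtain ⟨a, c, h1, h2⟩ := lapEq_exists μ μ' hδ (Finset.univ.image s) (by simpa using hs)
    (fun u => ∑ i with s i = u, n i) (fun u => Finset.sum_nonneg fun i _ => hn i)
  have key : ∀ f : ℝ → ℝ, ∑ u ∈ Finset.univ.image s, (∑ i with s i = u, n i) * f u = ∑ i, n i * f (s i) := by
    intro f
    rw [← Finset.sum_fiberwise_of_maps_to (s := Finset.univ) (t := Finset.univ.image s) (g := s)
      (fun i _ => Finset.mem_image_of_mem s (Finset.mem_univ i))]
    refine Finset.sum_congr rfl fun u _ => ?_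
    rw [Finset.sum_mul]
    refine Finset.sum_congr rfl fun i hi => ?_
    rw [(Finset.mem_filter.1 hi).2]
  refine ⟨a, c, fun ℱ z Z hZ => ?_, fun ℱ z Z hZ => ?_⟩
  · rw [← h1 ℱ z Z hZ]
    simp_rw [key (fun u => Z u _)]
  · rw [← h2 ℱ z Z hZ]
    simp_rw [key (fun u => Z u _)]

end IsBESQ

namespace IsBESQ

/-- time-scaled filtration -/
def scaleFil {Ω : Type*} {m : MeasurableSpace Ω} (ℱ : Filtration ℝ m) (t : ℝ) (ht : 0 < t) : Filtration ℝ m where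
  seq s := ℱ (t * s)
  mono' := fun a b hab => ℱ.mono (mul_le_mul_of_nonneg_left hab ht.le)
  le' := fun s => ℱ.le _

variable {Ω : Type*} {m : MeasurableSpace Ω} {μ : Measure Ω} [IsProbabilityMeasure μ]
  {ℱ : Filtration ℝ m} {δ y : ℝ} {Y : ℝ → Ω → ℝ}

lemma scale (hY : IsBESQ μ ℱ δ y Y) {t : ℝ} (ht : 0 < t) :
    IsBESQ μ (scaleFil ℱ t ht) δ (y / t) (fun s ω => Y (t * s) ω / t) where
  nonneg s ω := div_nonneg (hY.nonneg _ _) ht.le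
  cont ω := ((hY.cont ω).comp (continuous_const.mul continuous_id)).div_const t
  init ω := by simp [hY.init]
  adapted s := (hY.adapted (t * s)).div_const t
  integrable_sq s := by
    simp_rw [div_pow]
    exact (hY.integrable_sq _).div_const _
  mart a b ha hab := by
    have h := hY.mart (t * a) (t * b) (by positivity) (mul_le_mul_of_nonneg_left hab ht.le)
    have e : (fun ω => Y (t * b) ω / t - y / t - δ * b) = (t⁻¹ : ℝ) • (fun ω => Y (t * b) ω - y - δ * (t * b)) := by
      ext ω; simp only [Pi.smul_apply, smul_eq_mul]; field_simp
    rw [e]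
    refine (condExp_smul _ _ _).trans ?_
    change t⁻¹ • μ[(fun ω => Y (t * b) ω - y - δ * (t * b)) | ℱ (t * a)] =ᵐ[μ] _
    filter_upwards [h] with ω hω
    rw [Pi.smul_apply, hω, smul_eq_mul]
    field_simp
  qv a b ha hab := by
    have h := hY.qv (t * a) (t * b) (by positivity) (mul_le_mul_of_nonneg_left hab ht.le)
    have i : ∀ b ω, ∫ u in (0:ℝ)..b, Y (t * u) ω / t = t⁻¹ ^ 2 * ∫ u in (0:ℝ)..(t*b), Y u ω := by
      intro b ω
      rw [intervalIntegral.integral_div, intervalIntegral.integral_comp_mul_left (fun u => Y u ω) ht.ne']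
      simp only [mul_zero, smul_eq_mul]
      field_simp
    have e : (fun ω => (Y (t * b) ω / t - y / t - δ * b) ^ 2 - 4 * ∫ u in (0:ℝ)..b, Y (t * u) ω / t) =
        (t⁻¹ ^ 2 : ℝ) • (fun ω => (Y (t * b) ω - y - δ * (t * b)) ^ 2 - 4 * ∫ u in (0:ℝ)..(t*b), Y u ω) := by
      ext ω; simp only [Pi.smul_apply, smul_eq_mul, i]; field_simp
    rw [e]
    refine (condExp_smul _ _ _).trans ?_
    change t⁻¹ ^ 2 • μ[(fun ω => (Y (t * b) ω - y - δ * (t * b)) ^ 2 - 4 * ∫ u in (0:ℝ)..(t*b), Y u ω) | ℱ (t * a)] =ᵐ[μ] _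
    filter_upwards [h] with ω hω
    rw [Pi.smul_apply, hω, smul_eq_mul]
    simp only [i]
    field_simp

lemma scale_func (hY : IsBESQ μ ℱ δ y Y) {t α γ : ℝ} (ht : 0 < t) (ω : Ω) :
    (∫ s in (1:ℝ)..t, s ^ γ * (Y s ω) ^ α) / t ^ (1 + γ + α) = ∫ s in (1/t)..1, s ^ γ * (Y (t * s) ω / t) ^ α := by
  have h := intervalIntegral.integral_comp_mul_left (a := 1/t) (b := 1) (fun s => s ^ γ * (Y s ω) ^ α) ht.ne'
  rw [mul_one, mul_one_div_cancel ht.ne'] at h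
  have e : ∫ s in (1/t)..1, s ^ γ * (Y (t * s) ω / t) ^ α =
      ∫ s in (1/t)..1, (t ^ (γ + α))⁻¹ * ((t * s) ^ γ * (Y (t * s) ω) ^ α) := by
    refine intervalIntegral.integral_congr fun s hs => ?_
    have hs0 : 0 < s := by
      have : 0 < min (1/t) 1 := lt_min (by positivity) one_pos
      exact this.trans_le hs.1
    rw [Real.div_rpow (hY.nonneg _ _) ht.le, Real.mul_rpow ht.le hs0.le, Real.rpow_add ht]
    have := Real.rpow_pos_of_pos ht γ
    have := Real.rpow_pos_of_pos ht α
    field_simp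
  rw [e, intervalIntegral.integral_const_mul, h, add_assoc, Real.rpow_add ht, Real.rpow_one, smul_eq_mul]
  have := Real.rpow_pos_of_pos ht (γ + α)
  field_simp

end IsBESQ

namespace IsBESQ

variable {Ω : Type*} {m : MeasurableSpace Ω} {μ : Measure Ω} [IsProbabilityMeasure μ]
  {ℱ : Filtration ℝ m} {δ y : ℝ} {Y : ℝ → Ω → ℝ}

lemma sup_choice (hδ : 0 ≤ δ) {K z s0 : ℝ} (hK : 0 ≤ K) {Z : ℝ → Ω → ℝ} (hZ : IsBESQ μ ℱ δ z Z)
    (hz0 : 0 ≤ z) (hz : z ≤ K * s0) {T : ℝ} (hT : 0 < T) :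
    ∃ V : Ω → ℝ, Integrable V μ ∧ (∀ ω, 0 ≤ V ω) ∧ ∫ ω, V ω ∂μ ≤ 4 * (((K + δ) ^ 2 + 4 * K + 2 * δ) * T ^ 2) ∧
      (s0 ≤ T → ∀ᵐ ω ∂μ, ∀ u ∈ Icc 0 T, (Z u ω) ^ 2 ≤ V ω) := by
  by_cases h : s0 ≤ T
  · obtain ⟨V, h1, h2, h3, h4⟩ := hZ.exists_sup hδ hT
    refine ⟨V, h1, h2, h3.trans ?_, fun _ => h4⟩
    rw [hZ.second_moment hT.le]
    have hzT : z ≤ K * T := hz.trans (by gcongr)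
    have : (z + δ * T) ^ 2 ≤ ((K + δ) * T) ^ 2 := by gcongr; linarith
    nlinarith
  · refine ⟨fun _ => 0, integrable_zero _ _ _, fun _ => le_rfl, ?_, fun h' => absurd h' h⟩
    simp; positivity

lemma growth (μ : Measure Ω) [IsProbabilityMeasure μ] (hδ : 0 ≤ δ) {K θ : ℝ} (hK : 0 ≤ K) (hθ : 0 < θ) (hθ1 : θ < 1) :
    ∃ C : ℝ, 0 ≤ C ∧ ∀ (ℱ : Filtration ℝ m) (z : ℝ) (Z : ℝ → Ω → ℝ), IsBESQ μ ℱ δ z Z → ∀ s0, 0 ≤ z → z ≤ K * s0 →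
      ∀ B, 0 < B → ∃ b : Set Ω, μ b ≤ ENNReal.ofReal (C / B ^ 2) ∧
        ∀ ω ∉ b, ∀ s ∈ Icc s0 1, 0 < s → Z s ω ≤ B * s ^ (1 - θ) := by
  set C1 := (K + δ) ^ 2 + 4 * K + 2 * δ with hC1
  have C10 : 0 ≤ C1 := by positivity
  set q : ℝ := (1 / 2 : ℝ) ^ (2 * θ) with hq
  have q0 : 0 < q := by positivity
  have q1 : q < 1 := Real.rpow_lt_one (by norm_num) (by norm_num) (by positivity)
  have h1q : 0 < 1 - q := by linarith
  refine ⟨4 * (4 * C1 * (1 - q)⁻¹), by positivity, fun ℱ z Z hZ s0 hz0 hz B hB => ?_⟩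
  set T : ℕ → ℝ := fun k => (1 / 2 : ℝ) ^ k with hT
  have T0 : ∀ k, 0 < T k := fun k => by positivity
  choose V hVi hV0 hVb hV using fun k => sup_choice hδ hK hZ hz0 hz (T0 k)
  set U : Ω → ENNReal := fun ω => ∑' k, ENNReal.ofReal (T k ^ (-(2 * (1 - θ))) * V k ω) with hU
  have ckV : ∀ k, Integrable (fun ω => T k ^ (-(2 * (1 - θ))) * V k ω) μ := fun k => (hVi k).const_mul _
  have ckm : ∀ k, AEMeasurable (fun ω => ENNReal.ofReal (T k ^ (-(2 * (1 - θ))) * V k ω)) μ := fun k =>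
    (ckV k).aemeasurable.ennreal_ofReal
  have hUm : AEMeasurable U μ := AEMeasurable.ennreal_tsum ckm
  have hUl : ∫⁻ ω, U ω ∂μ ≤ ENNReal.ofReal (4 * C1 * (1 - q)⁻¹) := by
    rw [hU, lintegral_tsum ckm]
    have hg : HasSum (fun k : ℕ => 4 * C1 * q ^ k) (4 * C1 * (1 - q)⁻¹) :=
      (hasSum_geometric_of_lt_one q0.le q1).mul_left _
    rw [← hg.tsum_eq, ENNReal.ofReal_tsum_of_nonneg (fun k => by positivity) hg.summable]
    refine ENNReal.tsum_le_tsum fun k => ?_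
    rw [← ofReal_integral_eq_lintegral_ofReal (ckV k) (ae_of_all _ fun ω => mul_nonneg (Real.rpow_nonneg (T0 k).le _) (hV0 k ω))]
    apply ENNReal.ofReal_le_ofReal
    rw [integral_const_mul]
    have hp : 0 ≤ T k ^ (-(2 * (1 - θ))) := Real.rpow_nonneg (T0 k).le _
    refine (mul_le_mul_of_nonneg_left (hVb k) hp).trans (le_of_eq ?_)
    have e : T k ^ (-(2 * (1 - θ))) * T k ^ 2 = q ^ k := by
      rw [← Real.rpow_natCast (T k) 2, ← Real.rpow_add (T0 k), hq, hT]
      simp only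
      rw [← Real.rpow_natCast, ← Real.rpow_natCast, ← Real.rpow_mul (by norm_num), ← Real.rpow_mul (by norm_num)]
      congr 1; push_cast; ring
    rw [← e]; ring
  set P : Ω → Prop := fun ω => ∀ k, s0 ≤ T k → ∀ u ∈ Icc 0 (T k), (Z u ω) ^ 2 ≤ V k ω with hP
  have hPae : ∀ᵐ ω ∂μ, P ω := by
    rw [hP, ae_all_iff]
    intro k
    by_cases h : s0 ≤ T k
    · filter_upwards [hV k h] with ω hω _ using hω
    · exact ae_of_all _ fun ω h' => absurd h' h
  refine ⟨{ω | ENNReal.ofReal (B ^ 2 / 4) ≤ U ω} ∪ {ω | ¬ P ω}, ?_, ?_⟩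
  · refine (measure_union_le _ _).trans ?_
    have : μ {ω | ¬ P ω} = 0 := hPae
    rw [this, add_zero]
    refine (meas_ge_le_lintegral_div hUm (by simp; positivity) ENNReal.ofReal_ne_top).trans ?_
    refine (ENNReal.div_le_div_right hUl _).trans (le_of_eq ?_)
    rw [← ENNReal.ofReal_div_of_pos (by positivity)]
    congr 1
    field_simp
  · intro ω hω s hs hs0
    simp only [mem_union, mem_setOf_eq, not_or, not_le, not_not] at hω
    obtain ⟨h1, h2⟩ := hω
    obtain ⟨k, hk1, hk2⟩ := exists_nat_pow_near_of_lt_one hs0 hs.2 (by norm_num : (0:ℝ) < 1/2) (by norm_num)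
    have a1 := h2 k (hs.1.trans hk2) s ⟨hs0.le, hk2⟩
    have a2 : ENNReal.ofReal (T k ^ (-(2 * (1 - θ))) * V k ω) < ENNReal.ofReal (B ^ 2 / 4) :=
      (ENNReal.le_tsum k).trans_lt h1
    rw [ENNReal.ofReal_lt_ofReal_iff (by positivity), Real.rpow_neg (T0 k).le] at a2
    have hp : 0 < T k ^ (2 * (1 - θ)) := Real.rpow_pos_of_pos (T0 k) _
    rw [inv_mul_lt_iff₀ hp] at a2
    have hTs : T k ≤ 2 * s := by
      rw [pow_succ] at hk1
      simp only [hT]; linarith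
    have a3 : T k ^ (2 * (1 - θ)) ≤ 4 * (s ^ (1 - θ)) ^ 2 := by
      calc T k ^ (2 * (1 - θ)) ≤ (2 * s) ^ (2 * (1 - θ)) := Real.rpow_le_rpow (T0 k).le hTs (by linarith)
        _ = 2 ^ (2 * (1 - θ)) * s ^ (2 * (1 - θ)) := Real.mul_rpow (by norm_num) hs0.le
        _ ≤ 2 ^ (2 : ℝ) * s ^ (2 * (1 - θ)) := by
          gcongr
          · norm_num
          · linarith
        _ = _ := by
          rw [mul_comm 2 (1 - θ), Real.rpow_mul hs0.le]
          norm_num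
    refine abs_le_of_sq_le_sq' ?_ (by positivity) |>.2
    rw [mul_pow]
    have hB2 : 0 < B ^ 2 := by positivity
    nlinarith

end IsBESQ

namespace IsBESQ

lemma poly_approx {B α κ : ℝ} (hα : 0 ≤ α) (hκ : 0 < κ) :
    ∃ p : Polynomial ℝ, ∀ x ∈ Icc 0 B, |p.eval (Real.exp (-x)) - x ^ α| ≤ κ := by
  have hc : ContinuousOn (fun u : ℝ => (-Real.log u) ^ α) (Icc (Real.exp (-B)) 1) := by
    refine (Real.continuous_rpow_const hα).comp_continuousOn (ContinuousOn.neg ?_)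
    refine Real.continuousOn_log.mono fun u hu => ?_
    exact ((Real.exp_pos _).trans_le hu.1).ne'
  obtain ⟨p, hp⟩ := exists_polynomial_near_of_continuousOn _ _ _ hc κ hκ
  refine ⟨p, fun x hx => ?_⟩
  have := hp (Real.exp (-x)) ⟨Real.exp_le_exp.2 (by linarith [hx.2]), Real.exp_le_one_iff.2 (by linarith [hx.1])⟩
  simp only [Real.log_exp, neg_neg] at this
  exact this.le

lemma path_approx {f : ℝ → ℝ} (hf : Continuous f) (hf0 : ∀ s, 0 ≤ f s) {α γ B ε s0 κ θ ρ : ℝ} (hα : 0 ≤ α)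
    (hB : 0 < B) (hs0 : 0 ≤ s0) (hsε : s0 ≤ ε) (hε : 0 < ε) (hε1 : ε < 1) (hθ1 : θ ≤ 1) (hρ : ρ = γ + α * (1 - θ)) (hρ1 : -1 < ρ)
    {p : Polynomial ℝ} (hp : ∀ x ∈ Icc 0 B, |p.eval (Real.exp (-x)) - x ^ α| ≤ κ)
    (hfB : ∀ s ∈ Icc s0 1, 0 < s → f s ≤ B * s ^ (1 - θ)) :
    |(∫ s in s0..1, s ^ γ * f s ^ α) - ∫ s in ε..1, s ^ γ * p.eval (Real.exp (-f s))| ≤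
      B ^ α * (ε ^ (ρ + 1) / (ρ + 1)) + κ * ∫ s in ε..1, s ^ γ := by
  have hmeas : Measurable (fun s : ℝ => s ^ γ * f s ^ α) := by
    have := hf.measurable
    fun_prop
  have hbd : ∀ s ∈ Ioc s0 1, ‖s ^ γ * f s ^ α‖ ≤ B ^ α * s ^ ρ := by
    intro s hs
    have hsp : 0 < s := hs0.trans_lt hs.1
    rw [Real.norm_of_nonneg (mul_nonneg (Real.rpow_nonneg hsp.le _) (Real.rpow_nonneg (hf0 s) _))]
    have h1 : f s ^ α ≤ (B * s ^ (1 - θ)) ^ α := Real.rpow_le_rpow (hf0 s) (hfB s ⟨hs.1.le, hs.2⟩ hsp) hα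
    rw [Real.mul_rpow hB.le (Real.rpow_nonneg hsp.le _), ← Real.rpow_mul hsp.le] at h1
    calc s ^ γ * f s ^ α ≤ s ^ γ * (B ^ α * s ^ ((1 - θ) * α)) :=
          mul_le_mul_of_nonneg_left h1 (Real.rpow_nonneg hsp.le _)
      _ = B ^ α * (s ^ γ * s ^ ((1 - θ) * α)) := by ring
      _ = _ := by rw [← Real.rpow_add hsp, hρ, mul_comm α]
  have hri : ∀ a b : ℝ, IntervalIntegrable (fun s : ℝ => B ^ α * s ^ ρ) volume a b := fun a b =>
    (intervalIntegral.intervalIntegrable_rpow' hρ1).const_mul _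
  have hFint : ∀ a b, s0 ≤ a → a ≤ b → b ≤ 1 → IntervalIntegrable (fun s : ℝ => s ^ γ * f s ^ α) volume a b := by
    intro a b ha hab hb
    refine (hri a b).mono_fun' hmeas.aestronglyMeasurable ?_
    refine (ae_restrict_iff' measurableSet_uIoc).2 (ae_of_all _ fun s hs => ?_)
    rw [uIoc_of_le hab] at hs
    exact hbd s ⟨ha.trans_lt hs.1, hs.2.trans hb⟩
  have hγi : IntervalIntegrable (fun s : ℝ => s ^ γ) volume ε 1 := by
    refine ContinuousOn.intervalIntegrable ?_
    rw [uIcc_of_le hε1.le]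
    exact fun s hs => (Real.continuousAt_rpow_const _ _ (Or.inl (hε.trans_le hs.1).ne')).continuousWithinAt
  have hpi : IntervalIntegrable (fun s : ℝ => s ^ γ * p.eval (Real.exp (-f s))) volume ε 1 := by
    refine hγi.mul_continuousOn (Continuous.continuousOn ?_)
    exact p.continuous.comp (Real.continuous_exp.comp hf.neg)
  rw [← intervalIntegral.integral_add_adjacent_intervals (hFint s0 ε le_rfl hsε hε1.le) (hFint ε 1 hsε hε1.le le_rfl),
    add_sub_assoc, ← intervalIntegral.integral_sub (hFint ε 1 hsε hε1.le le_rfl) hpi]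
  refine (abs_add_le _ _).trans (add_le_add ?_ ?_)
  · have h1 : |∫ s in s0..ε, s ^ γ * f s ^ α| ≤ ∫ s in s0..ε, B ^ α * s ^ ρ := by
      rw [← Real.norm_eq_abs]
      refine intervalIntegral.norm_integral_le_of_norm_le hsε (ae_of_all _ fun s hs => ?_) (hri _ _)
      exact hbd s ⟨hs.1, hs.2.trans hε1.le⟩
    refine h1.trans ?_
    rw [intervalIntegral.integral_const_mul, integral_rpow (Or.inl hρ1)]
    have : 0 < ρ + 1 := by linarith
    have : 0 ≤ s0 ^ (ρ + 1) := Real.rpow_nonneg hs0 _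
    gcongr
    linarith
  · rw [← intervalIntegral.integral_const_mul]
    rw [← Real.norm_eq_abs]
    refine intervalIntegral.norm_integral_le_of_norm_le hε1.le (ae_of_all _ fun s hs => ?_) (hγi.const_mul _)
    have hsp : 0 < s := hε.trans hs.1
    rw [← mul_sub, norm_mul, Real.norm_of_nonneg (Real.rpow_nonneg hsp.le _), mul_comm, Real.norm_eq_abs, abs_sub_comm]
    refine mul_le_mul_of_nonneg_right (hp (f s) ⟨hf0 s, ?_⟩) (Real.rpow_nonneg hsp.le _)
    have := hfB s ⟨hsε.trans hs.1.le, hs.2⟩ hsp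
    have h2 : s ^ (1 - θ) ≤ 1 := Real.rpow_le_one hsp.le hs.2 (by linarith)
    nlinarith

variable {Ω : Type*} {m : MeasurableSpace Ω} {Ω' : Type*} {m' : MeasurableSpace Ω'}

/-- approximating functional -/
noncomputable def X (γ ε : ℝ) (p : Polynomial ℝ) (f : ℝ → ℝ) : ℝ :=
  ∫ s in ε..1, s ^ γ * p.eval (Real.exp (-f s))

lemma approx (μ : Measure Ω) [IsProbabilityMeasure μ] (μ' : Measure Ω') [IsProbabilityMeasure μ']
    {δ K α γ η : ℝ} (hδ : 0 ≤ δ) (hK : 0 ≤ K) (hα : 0 ≤ α) (hγ : -α < γ) (hη : 0 < η) :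
    ∃ ε : ℝ, 0 < ε ∧ ε < 1 ∧ ∃ p : Polynomial ℝ,
      (∀ (ℱ : Filtration ℝ m) (z : ℝ) (Z : ℝ → Ω → ℝ), IsBESQ μ ℱ δ z Z → ∀ s0, 0 ≤ s0 → s0 ≤ ε → 0 ≤ z → z ≤ K * s0 →
        ∃ b : Set Ω, μ b ≤ ENNReal.ofReal η ∧ ∀ ω ∉ b,
          |(∫ s in s0..1, s ^ γ * (Z s ω) ^ α) - X γ ε p (fun s => Z s ω)| ≤ η) ∧
      (∀ (ℱ : Filtration ℝ m') (z : ℝ) (Z : ℝ → Ω' → ℝ), IsBESQ μ' ℱ δ z Z → ∀ s0, 0 ≤ s0 → s0 ≤ ε → 0 ≤ z → z ≤ K * s0 →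
        ∃ b : Set Ω', μ' b ≤ ENNReal.ofReal η ∧ ∀ ω ∉ b,
          |(∫ s in s0..1, s ^ γ * (Z s ω) ^ α) - X γ ε p (fun s => Z s ω)| ≤ η) := by
  set θ : ℝ := 1 / (α + 2) with hθ
  have hθ0 : 0 < θ := by positivity
  have hθ1 : θ < 1 := by rw [hθ, div_lt_one (by positivity)]; linarith
  set ρ := γ + α * (1 - θ) with hρ
  have hαθ : α * θ < 1 := by rw [hθ, mul_one_div, div_lt_one (by positivity)]; linarith
  have hρ1 : -1 < ρ := by rw [hρ]; linarith
  have hρ2 : 0 < ρ + 1 := by linarith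
  obtain ⟨C, hC, H⟩ := growth (m := m) μ hδ hK hθ0 hθ1
  obtain ⟨C', hC', H'⟩ := growth (m := m') μ' hδ hK hθ0 hθ1
  obtain ⟨B, hB, hB1, hB2⟩ : ∃ B : ℝ, 0 < B ∧ C / B ^ 2 ≤ η ∧ C' / B ^ 2 ≤ η := by
    refine ⟨Real.sqrt ((C + C' + 1) / η), Real.sqrt_pos.2 (by positivity), ?_, ?_⟩
    all_goals
      rw [Real.sq_sqrt (by positivity), div_div_eq_mul_div, div_le_iff₀ (by positivity)]
      nlinarith
  obtain ⟨ε, hε, hε1, hεB⟩ : ∃ ε : ℝ, 0 < ε ∧ ε < 1 ∧ B ^ α * (ε ^ (ρ + 1) / (ρ + 1)) ≤ η / 2 := by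
    have hlim : Tendsto (fun ε : ℝ => B ^ α * (ε ^ (ρ + 1) / (ρ + 1))) (nhdsWithin 0 (Ioi 0)) (nhds 0) := by
      have h1 : Tendsto (fun ε : ℝ => ε ^ (ρ + 1)) (nhds 0) (nhds 0) := by
        have := (Real.continuous_rpow_const hρ2.le).tendsto (0:ℝ)
        rwa [Real.zero_rpow hρ2.ne'] at this
      have := ((h1.div_const (ρ + 1)).const_mul (B ^ α)).mono_left (nhdsWithin_le_nhds (s := Ioi (0:ℝ)))
      simpa using this
    have e1 := hlim.eventually (ge_mem_nhds (half_pos hη))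
    have e2 : ∀ᶠ ε : ℝ in nhdsWithin 0 (Ioi 0), ε ∈ Ioo (0:ℝ) 1 := Ioo_mem_nhdsGT one_pos
    obtain ⟨ε, h1, h2⟩ := (e1.and e2).exists
    exact ⟨ε, h2.1, h2.2, h1⟩
  set J := ∫ s in ε..1, s ^ γ with hJ
  have J0 : 0 ≤ J := intervalIntegral.integral_nonneg hε1.le fun s hs => Real.rpow_nonneg (hε.le.trans hs.1) _
  obtain ⟨p, hp⟩ := poly_approx (B := B) hα (κ := η / 2 / (J + 1)) (by positivity)
  have hκ : η / 2 / (J + 1) * J ≤ η / 2 := by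
    rw [div_mul_eq_mul_div, div_le_iff₀ (by positivity)]
    nlinarith
  refine ⟨ε, hε, hε1, p, ?_, ?_⟩
  · intro ℱ z Z hZ s0 hs0 hs0ε hz hzK
    obtain ⟨b, hb1, hb2⟩ := H ℱ z Z hZ s0 hz hzK B hB
    refine ⟨b, hb1.trans (ENNReal.ofReal_le_ofReal hB1), fun ω hω => ?_⟩
    have := path_approx (hZ.cont ω) (fun s => hZ.nonneg s ω) hα hB hs0 hs0ε hε hε1 hθ1.le hρ hρ1 hp (hb2 ω hω)
    unfold X
    linarith
  · intro ℱ z Z hZ s0 hs0 hs0ε hz hzK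
    obtain ⟨b, hb1, hb2⟩ := H' ℱ z Z hZ s0 hz hzK B hB
    refine ⟨b, hb1.trans (ENNReal.ofReal_le_ofReal hB2), fun ω hω => ?_⟩
    have := path_approx (hZ.cont ω) (fun s => hZ.nonneg s ω) hα hB hs0 hs0ε hε hε1 hθ1.le hρ hρ1 hp (hb2 ω hω)
    unfold X
    linarith

end IsBESQ

namespace IsBESQ

variable {Ω : Type*} {m : MeasurableSpace Ω} {Ω' : Type*} {m' : MeasurableSpace Ω'}
  {μ : Measure Ω} [IsProbabilityMeasure μ] {μ' : Measure Ω'} [IsProbabilityMeasure μ']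
  {ℱ : Filtration ℝ m} {ℱ' : Filtration ℝ m'} {δ y z : ℝ} {Y Z : ℝ → Ω → ℝ} {Y' : ℝ → Ω' → ℝ}

/-- expansion of the product of polynomials -/
lemma poly_prod {ι : Type*} [Fintype ι] [DecidableEq ι] (p : Polynomial ℝ) (v : ι → ℝ) :
    ∏ i, p.eval (Real.exp (-v i)) = ∑ φ ∈ Fintype.piFinset (fun _ : ι => Finset.range (p.natDegree + 1)),
      (∏ i, p.coeff (φ i)) * Real.exp (-∑ i, (φ i : ℝ) * v i) := by
  simp_rw [Polynomial.eval_eq_sum_range]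
  rw [Finset.prod_univ_sum]
  refine Finset.sum_congr rfl fun φ _ => ?_
  rw [Finset.prod_mul_distrib, ← Finset.sum_neg_distrib, Real.exp_sum]
  congr 1
  refine Finset.prod_congr rfl fun i _ => ?_
  rw [← Real.exp_nat_mul]
  congr 1; ring

lemma exp_sum_integrable (hZ : IsBESQ μ ℱ δ z Z) {ι : Type*} [Fintype ι] (x : ι → ℝ) (n : ι → ℕ) :
    Integrable (fun ω => Real.exp (-∑ i, (n i : ℝ) * Z (x i) ω)) μ := by
  refine (integrable_const (1:ℝ)).mono' ?_ (ae_of_all _ fun ω => ?_)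
  · refine (Real.measurable_exp.comp (Measurable.neg ?_)).aestronglyMeasurable
    exact Finset.measurable_fun_sum _ fun i _ => (hZ.meas _).const_mul _
  · rw [Real.norm_of_nonneg (Real.exp_pos _).le, Real.exp_le_one_iff, neg_nonpos]
    exact Finset.sum_nonneg fun i _ => mul_nonneg (Nat.cast_nonneg _) (hZ.nonneg _ _)

lemma poly_fdd (hY : IsBESQ μ ℱ δ y Y) (hY' : IsBESQ μ' ℱ' δ 0 Y') (hδ : 0 ≤ δ) {ι : Type*} [Fintype ι]
    (x : ι → ℝ) (hx : ∀ i, 0 ≤ x i) (p : Polynomial ℝ) :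
    Tendsto (fun t : ℝ => ∫ ω, ∏ i, p.eval (Real.exp (-(Y (t * x i) ω / t))) ∂μ) atTop
      (nhds (∫ ω, ∏ i, p.eval (Real.exp (-(Y' (x i) ω))) ∂μ')) := by
  classical
  have e' : ∫ ω, ∏ i, p.eval (Real.exp (-(Y' (x i) ω))) ∂μ' =
      ∑ φ ∈ Fintype.piFinset (fun _ : ι => Finset.range (p.natDegree + 1)),
      (∏ i, p.coeff (φ i)) * ∫ ω, Real.exp (-∑ i, (φ i : ℝ) * Y' (x i) ω) ∂μ' := by
    simp_rw [poly_prod p (fun i => Y' (x i) _)]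
    rw [integral_finsetSum _ fun φ _ => (hY'.exp_sum_integrable x φ).const_mul _]
    simp_rw [integral_const_mul]
  have e : ∀ᶠ t : ℝ in atTop, ∑ φ ∈ Fintype.piFinset (fun _ : ι => Finset.range (p.natDegree + 1)),
      (∏ i, p.coeff (φ i)) * ∫ ω, Real.exp (-∑ i, (φ i : ℝ) * (Y (t * x i) ω / t)) ∂μ =
      ∫ ω, ∏ i, p.eval (Real.exp (-(Y (t * x i) ω / t))) ∂μ := by
    filter_upwards [eventually_gt_atTop 0] with t ht
    simp_rw [poly_prod p (fun i => (Y (t * x i) _ / t))]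
    rw [integral_finsetSum _ fun φ _ => ((hY.scale ht).exp_sum_integrable x φ).const_mul _]
    simp_rw [integral_const_mul]
  rw [e']
  refine Tendsto.congr' e ?_
  refine tendsto_finsetSum _ fun φ _ => Tendsto.const_mul _ ?_
  obtain ⟨a, c, h1, h2⟩ := lap_tuple μ μ' hδ x (fun i => (φ i : ℝ)) hx (fun i => Nat.cast_nonneg _)
  rw [h2 ℱ' 0 Y' hY']
  have e3 : ∀ᶠ t : ℝ in atTop, c * Real.exp (-(a * (y / t))) = ∫ ω, Real.exp (-∑ i, (φ i : ℝ) * (Y (t * x i) ω / t)) ∂μ := by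
    filter_upwards [eventually_gt_atTop 0] with t ht
    rw [h1 _ _ _ (hY.scale ht)]
  refine Tendsto.congr' e3 (Tendsto.const_mul _ ?_)
  refine (Real.continuous_exp.tendsto _).comp (Tendsto.neg (Tendsto.const_mul _ ?_))
  exact tendsto_const_nhds.div_atTop tendsto_id

/-- clamp to `[ε, 1]` -/
noncomputable def cl (ε s : ℝ) : ℝ := max ε (min s 1)

lemma cl_mem {ε : ℝ} (hε1 : ε < 1) (s : ℝ) : cl ε s ∈ Icc ε 1 :=
  ⟨le_max_left _ _, max_le hε1.le (min_le_right _ _)⟩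

lemma cl_eq {ε s : ℝ} (hs : s ∈ Ioc ε 1) : cl ε s = s := by
  unfold cl; rw [min_eq_left hs.2, max_eq_right hs.1.le]

lemma measurable_cl (ε : ℝ) : Measurable (cl ε) := measurable_const.max (measurable_id.min measurable_const)

lemma X_eq {γ ε : ℝ} (hε1 : ε < 1) (p : Polynomial ℝ) (f : ℝ → ℝ) :
    X γ ε p f = ∫ s, (cl ε s) ^ γ * p.eval (Real.exp (-f (cl ε s))) ∂(volume.restrict (Ioc ε 1)) := by
  unfold X
  rw [intervalIntegral.integral_of_le hε1.le]
  refine setIntegral_congr_fun measurableSet_Ioc fun s hs => ?_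
  rw [cl_eq hs]

lemma exists_R {γ ε : ℝ} (hε : 0 < ε) (hε1 : ε < 1) (p : Polynomial ℝ) :
    ∃ R : ℝ, 0 ≤ R ∧ ∀ s x, 0 ≤ x → |(cl ε s) ^ γ * p.eval (Real.exp (-x))| ≤ R := by
  have h1 : ContinuousOn (fun s : ℝ => s ^ γ) (Icc ε 1) := fun s hs =>
    (Real.continuousAt_rpow_const _ _ (Or.inl (hε.trans_le hs.1).ne')).continuousWithinAt
  obtain ⟨R1, hR1⟩ := isCompact_Icc.exists_bound_of_continuousOn h1
  obtain ⟨R2, hR2⟩ := (isCompact_Icc (a := (0:ℝ)) (b := 1)).exists_bound_of_continuousOn p.continuous.continuousOn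
  have R10 := (norm_nonneg _).trans (hR1 ε ⟨le_rfl, hε1.le⟩)
  have R20 := (norm_nonneg _).trans (hR2 0 ⟨le_rfl, zero_le_one⟩)
  refine ⟨R1 * R2, mul_nonneg R10 R20, fun s x hx => ?_⟩
  rw [abs_mul]
  exact mul_le_mul (hR1 _ (cl_mem hε1 s)) (hR2 _ ⟨(Real.exp_pos _).le, Real.exp_le_one_iff.2 (by linarith)⟩) (abs_nonneg _) R10

lemma joint_meas (hZ : IsBESQ μ ℱ δ z Z) (γ ε : ℝ) (p : Polynomial ℝ) :
    Measurable (fun a : Ω × ℝ => (cl ε a.2) ^ γ * p.eval (Real.exp (-Z (cl ε a.2) a.1))) := by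
  have h1 : Measurable (fun a : Ω × ℝ => cl ε a.2) := (measurable_cl ε).comp measurable_snd
  have h2 : Measurable (fun a : Ω × ℝ => Z (cl ε a.2) a.1) := hZ.jmeas.comp (h1.prodMk measurable_fst)
  exact (h1.pow_const γ).mul (p.continuous.measurable.comp (Real.measurable_exp.comp h2.neg))

lemma X_meas (hZ : IsBESQ μ ℱ δ z Z) {γ ε : ℝ} (hε1 : ε < 1) (p : Polynomial ℝ) :
    Measurable (fun ω => X γ ε p (fun s => Z s ω)) := by
  simp_rw [X_eq hε1]
  exact ((hZ.joint_meas γ ε p).stronglyMeasurable.integral_prod_right' (ν := volume.restrict (Ioc ε 1))).measurable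

lemma X_bound {γ ε R : ℝ} (hε : 0 < ε) (hε1 : ε < 1) {p : Polynomial ℝ} (hR0 : 0 ≤ R)
    (hR : ∀ s x, 0 ≤ x → |(cl ε s) ^ γ * p.eval (Real.exp (-x))| ≤ R) {f : ℝ → ℝ} (hf : ∀ s, 0 ≤ f s) :
    |X γ ε p f| ≤ R := by
  rw [X_eq hε1]
  have := norm_integral_le_of_norm_le_const (μ := volume.restrict (Ioc ε 1))
    (f := fun s => (cl ε s) ^ γ * p.eval (Real.exp (-f (cl ε s)))) (C := R)
    (ae_of_all _ fun s => hR s _ (hf _))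
  refine this.trans ?_
  rw [measureReal_restrict_apply_univ, Real.volume_real_Ioc_of_le hε1.le]
  nlinarith

lemma X_pow (hZ : IsBESQ μ ℱ δ z Z) {γ ε R : ℝ} (hε : 0 < ε) (hε1 : ε < 1) {p : Polynomial ℝ} (hR0 : 0 ≤ R)
    (hR : ∀ s x, 0 ≤ x → |(cl ε s) ^ γ * p.eval (Real.exp (-x))| ≤ R) (k : ℕ) :
    ∫ ω, (X γ ε p (fun s => Z s ω)) ^ k ∂μ =
      ∫ x, (∏ i, (cl ε (x i)) ^ γ) * (∫ ω, ∏ i, p.eval (Real.exp (-Z (cl ε (x i)) ω)) ∂μ)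
        ∂(Measure.pi (fun _ : Fin k => volume.restrict (Ioc ε 1))) := by
  have e : ∀ ω, (X γ ε p (fun s => Z s ω)) ^ k =
      ∫ x, ∏ i, ((cl ε (x i)) ^ γ * p.eval (Real.exp (-Z (cl ε (x i)) ω)))
        ∂(Measure.pi (fun _ : Fin k => volume.restrict (Ioc ε 1))) := by
    intro ω
    rw [integral_fintype_prod_eq_pow (fun s => (cl ε s) ^ γ * p.eval (Real.exp (-Z (cl ε s) ω))), X_eq hε1, Fintype.card_fin]
  simp_rw [e]
  rw [integral_integral_swap]
  · simp_rw [Finset.prod_mul_distrib, integral_const_mul]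
  · refine (integrable_const (R ^ k)).mono' ?_ (ae_of_all _ fun a => ?_)
    · refine Measurable.aestronglyMeasurable ?_
      refine Finset.measurable_fun_prod _ fun i _ => ?_
      have : Measurable (fun a : Ω × (Fin k → ℝ) => (a.1, a.2 i)) :=
        measurable_fst.prodMk ((measurable_pi_apply i).comp measurable_snd)
      exact (hZ.joint_meas γ ε p).comp this
    · simp only [Function.uncurry]
      rw [norm_prod]
      refine (Finset.prod_le_prod (fun _ _ => norm_nonneg _) (fun i _ => hR (a.2 i) _ (hZ.nonneg _ a.1))).trans ?_
      simp

lemma moment_tendsto (hY : IsBESQ μ ℱ δ y Y) (hY' : IsBESQ μ' ℱ' δ 0 Y') (hδ : 0 ≤ δ)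
    {γ ε : ℝ} (hε : 0 < ε) (hε1 : ε < 1) (p : Polynomial ℝ) (k : ℕ) :
    Tendsto (fun t : ℝ => ∫ ω, (X γ ε p (fun s => Y (t * s) ω / t)) ^ k ∂μ) atTop
      (nhds (∫ ω, (X γ ε p (fun s => Y' s ω)) ^ k ∂μ')) := by
  obtain ⟨R, hR0, hR⟩ := exists_R (γ := γ) hε hε1 p
  rw [hY'.X_pow hε hε1 hR0 hR]
  have e : ∀ᶠ t : ℝ in atTop,
      ∫ x, (∏ i, (cl ε (x i)) ^ γ) * (∫ ω, ∏ i, p.eval (Real.exp (-(Y (t * cl ε (x i)) ω / t))) ∂μ)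
        ∂(Measure.pi (fun _ : Fin k => volume.restrict (Ioc ε 1))) =
      ∫ ω, (X γ ε p (fun s => Y (t * s) ω / t)) ^ k ∂μ := by
    filter_upwards [eventually_gt_atTop 0] with t ht
    rw [(hY.scale ht).X_pow hε hε1 hR0 hR]
  refine Tendsto.congr' e ?_
  refine tendsto_integral_filter_of_dominated_convergence (fun _ => R ^ k) ?_ ?_ (integrable_const _) ?_
  · filter_upwards [eventually_gt_atTop 0] with t ht
    have h1 : Measurable (fun x : Fin k → ℝ => ∏ i, (cl ε (x i)) ^ γ) :=
      Finset.measurable_fun_prod _ fun i _ => ((measurable_cl ε).comp (measurable_pi_apply i)).pow_const γ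
    refine (h1.stronglyMeasurable.mul ?_).aestronglyMeasurable
    refine StronglyMeasurable.integral_prod_right (f := fun (x : Fin k → ℝ) ω => ∏ i, p.eval (Real.exp (-(Y (t * cl ε (x i)) ω / t)))) ?_
    refine Measurable.stronglyMeasurable ?_
    refine Finset.measurable_fun_prod _ fun i _ => ?_
    have h2 : Measurable (fun a : (Fin k → ℝ) × Ω => (cl ε (a.1 i), a.2)) :=
      ((measurable_cl ε).comp ((measurable_pi_apply i).comp measurable_fst)).prodMk measurable_snd
    have h3 := (hY.scale ht).jmeas.comp h2
    exact p.continuous.measurable.comp (Real.measurable_exp.comp h3.neg)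
  · filter_upwards [eventually_gt_atTop 0] with t ht
    refine ae_of_all _ fun x => ?_
    rw [← integral_const_mul]
    have : ∀ ω, ‖(∏ i, (cl ε (x i)) ^ γ) * ∏ i, p.eval (Real.exp (-(Y (t * cl ε (x i)) ω / t)))‖ ≤ R ^ k := by
      intro ω
      rw [← Finset.prod_mul_distrib, norm_prod]
      refine (Finset.prod_le_prod (fun _ _ => norm_nonneg _) (fun i _ => hR (x i) _ ((hY.scale ht).nonneg _ ω))).trans ?_
      simp
    have h2 := norm_integral_le_of_norm_le_const (μ := μ) (ae_of_all _ this)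
    simpa using h2
  · refine ae_of_all _ fun x => Tendsto.const_mul _ ?_
    exact poly_fdd hY hY' hδ (fun i => cl ε (x i)) (fun i => hε.le.trans (cl_mem hε1 _).1) p

lemma X_tendsto (hY : IsBESQ μ ℱ δ y Y) (hY' : IsBESQ μ' ℱ' δ 0 Y') (hδ : 0 ≤ δ)
    {γ ε : ℝ} (hε : 0 < ε) (hε1 : ε < 1) (p : Polynomial ℝ) {g : ℝ → ℝ} (hg : Continuous g) :
    Tendsto (fun t : ℝ => ∫ ω, g (X γ ε p (fun s => Y (t * s) ω / t)) ∂μ) atTop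
      (nhds (∫ ω, g (X γ ε p (fun s => Y' s ω)) ∂μ')) := by
  obtain ⟨R, hR0, hR⟩ := exists_R (γ := γ) hε hε1 p
  have bi : ∀ {Ω₀ : Type _} {m₀ : MeasurableSpace Ω₀} (μ₀ : Measure Ω₀) [IsProbabilityMeasure μ₀]
      (ξ : Ω₀ → ℝ) (hξ : Measurable ξ) (hb : ∀ ω, |ξ ω| ≤ R) (f : ℝ → ℝ) (hf : Continuous f),
      Integrable (fun ω => f (ξ ω)) μ₀ := by
    intro Ω₀ m₀ μ₀ _ ξ hξ hb f hf
    obtain ⟨M, hM⟩ := (isCompact_Icc (a := -R) (b := R)).exists_bound_of_continuousOn hf.continuousOn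
    exact (integrable_const M).mono' (hf.measurable.comp hξ).aestronglyMeasurable
      (ae_of_all _ fun ω => hM _ (abs_le.1 (hb ω)))
  have bi' : ∀ {Ω₀ : Type _} {m₀ : MeasurableSpace Ω₀} (μ₀ : Measure Ω₀) [IsProbabilityMeasure μ₀]
      (ξ : Ω₀ → ℝ) (hξ : Measurable ξ) (hb : ∀ ω, |ξ ω| ≤ R) (f : ℝ → ℝ) (hf : Continuous f),
      Integrable (fun ω => f (ξ ω)) μ₀ := by
    intro Ω₀ m₀ μ₀ _ ξ hξ hb f hf
    obtain ⟨M, hM⟩ := (isCompact_Icc (a := -R) (b := R)).exists_bound_of_continuousOn hf.continuousOn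
    exact (integrable_const M).mono' (hf.measurable.comp hξ).aestronglyMeasurable
      (ae_of_all _ fun ω => hM _ (abs_le.1 (hb ω)))
  have hXm' := hY'.X_meas (γ := γ) hε1 p
  have hXb' : ∀ ω, |X γ ε p (fun s => Y' s ω)| ≤ R := fun ω => X_bound hε hε1 hR0 hR (fun s => hY'.nonneg s ω)
  have hXm : ∀ t : ℝ, 0 < t → Measurable (fun ω => X γ ε p (fun s => Y (t * s) ω / t)) := fun t ht =>
    (hY.scale ht).X_meas hε1 p
  have hXb : ∀ t : ℝ, 0 < t → ∀ ω, |X γ ε p (fun s => Y (t * s) ω / t)| ≤ R := fun t ht ω =>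
    X_bound hε hε1 hR0 hR (fun s => (hY.scale ht).nonneg s ω)
  have hpoly : ∀ P : Polynomial ℝ, Tendsto (fun t : ℝ => ∫ ω, P.eval (X γ ε p (fun s => Y (t * s) ω / t)) ∂μ) atTop
      (nhds (∫ ω, P.eval (X γ ε p (fun s => Y' s ω)) ∂μ')) := by
    intro P
    simp_rw [Polynomial.eval_eq_sum_range]
    rw [integral_finsetSum _ fun i _ => (bi' μ' _ hXm' hXb' (fun v => v ^ i) (continuous_pow i)).const_mul _]
    have e : ∀ᶠ t : ℝ in atTop,
        ∑ i ∈ Finset.range (P.natDegree + 1), ∫ ω, P.coeff i * (X γ ε p (fun s => Y (t * s) ω / t)) ^ i ∂μ =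
        ∫ ω, ∑ i ∈ Finset.range (P.natDegree + 1), P.coeff i * (X γ ε p (fun s => Y (t * s) ω / t)) ^ i ∂μ := by
      filter_upwards [eventually_gt_atTop 0] with t ht
      rw [integral_finsetSum _ fun i _ => (bi μ _ (hXm t ht) (hXb t ht) (fun v => v ^ i) (continuous_pow i)).const_mul _]
    refine Tendsto.congr' e (tendsto_finsetSum _ fun i _ => ?_)
    simp_rw [integral_const_mul]
    exact (moment_tendsto hY hY' hδ hε hε1 p i).const_mul _
  rw [Metric.tendsto_nhds]
  intro r hr
  obtain ⟨P, hP⟩ := exists_polynomial_near_of_continuousOn (-R) R g hg.continuousOn (r / 4) (by positivity)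
  have h1 := (Metric.tendsto_nhds.1 (hpoly P)) (r / 4) (by positivity)
  have d' : |∫ ω, P.eval (X γ ε p (fun s => Y' s ω)) ∂μ' - ∫ ω, g (X γ ε p (fun s => Y' s ω)) ∂μ'| ≤ r / 4 := by
    rw [← integral_sub (bi' μ' _ hXm' hXb' _ P.continuous) (bi' μ' _ hXm' hXb' _ hg)]
    have := norm_integral_le_of_norm_le_const (μ := μ') (C := r / 4)
      (f := fun ω => P.eval (X γ ε p (fun s => Y' s ω)) - g (X γ ε p (fun s => Y' s ω)))
      (ae_of_all _ fun ω => (hP _ (abs_le.1 (hXb' ω))).le)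
    simpa using this
  filter_upwards [h1, eventually_gt_atTop 0] with t h1 ht
  have d : |∫ ω, P.eval (X γ ε p (fun s => Y (t * s) ω / t)) ∂μ - ∫ ω, g (X γ ε p (fun s => Y (t * s) ω / t)) ∂μ| ≤ r / 4 := by
    rw [← integral_sub (bi μ _ (hXm t ht) (hXb t ht) _ P.continuous) (bi μ _ (hXm t ht) (hXb t ht) _ hg)]
    have := norm_integral_le_of_norm_le_const (μ := μ) (C := r / 4)
      (f := fun ω => P.eval (X γ ε p (fun s => Y (t * s) ω / t)) - g (X γ ε p (fun s => Y (t * s) ω / t)))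
      (ae_of_all _ fun ω => (hP _ (abs_le.1 (hXb t ht ω))).le)
    simpa using this
  rw [Real.dist_eq] at h1 ⊢
  have := abs_le.1 d
  have := abs_le.1 d'
  have := abs_lt.1 h1
  rw [abs_lt]
  constructor <;> linarith

end IsBESQ

namespace IsBESQ

variable {Ω : Type*} {m : MeasurableSpace Ω} {Ω' : Type*} {m' : MeasurableSpace Ω'}
  {μ : Measure Ω} [IsProbabilityMeasure μ] {μ' : Measure Ω'} [IsProbabilityMeasure μ']
  {ℱ : Filtration ℝ m} {ℱ' : Filtration ℝ m'} {δ y z : ℝ} {Y Z : ℝ → Ω → ℝ} {Y' : ℝ → Ω' → ℝ}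

lemma F_meas (hZ : IsBESQ μ ℱ δ z Z) (α γ a b : ℝ) :
    Measurable (fun ω => ∫ s in a..b, s ^ γ * (Z s ω) ^ α) := by
  have h : Measurable (fun a : Ω × ℝ => a.2 ^ γ * (Z a.2 a.1) ^ α) := by
    have h2 : Measurable (fun a : Ω × ℝ => Z a.2 a.1) := hZ.jmeas.comp measurable_swap
    exact (measurable_snd.pow_const γ).mul (h2.pow_const α)
  unfold intervalIntegral
  exact ((h.stronglyMeasurable.integral_prod_right' (ν := volume.restrict (Ioc a b))).sub
    (h.stronglyMeasurable.integral_prod_right' (ν := volume.restrict (Ioc b a)))).measurable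

lemma close_of_bad {ξ ζ : Ω → ℝ} (hξ : Measurable ξ) (hζ : Measurable ζ) {g : ℝ → ℝ} {L C η : ℝ} (hη : 0 < η)
    (hL0 : 0 ≤ L) (hL : ∀ x y, |g x - g y| ≤ L * |x - y|) (hg : Measurable g) (hC : ∀ x y, |g x - g y| ≤ C) {b : Set Ω} (hb : μ b ≤ ENNReal.ofReal η)
    (h : ∀ ω ∉ b, |ξ ω - ζ ω| ≤ η) : |∫ ω, g (ξ ω) ∂μ - ∫ ω, g (ζ ω) ∂μ| ≤ (L + C) * η := by
  have C0 : 0 ≤ C := (abs_nonneg _).trans (hC 0 0)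
  have gi : ∀ {ξ : Ω → ℝ}, Measurable ξ → Integrable (fun ω => g (ξ ω)) μ := by
    intro ξ hξ
    refine (integrable_const (|g 0| + C)).mono' (hg.comp hξ).aestronglyMeasurable (ae_of_all _ fun ω => ?_)
    have := hC (ξ ω) 0
    rw [Real.norm_eq_abs]
    linarith [abs_sub_abs_le_abs_sub (g (ξ ω)) (g 0)]
  set B : Set Ω := {ω | η < |ξ ω - ζ ω|} with hB
  have hBm : MeasurableSet B := measurableSet_lt measurable_const (hξ.sub hζ).abs
  have hBb : B ⊆ b := fun ω hω => by
    by_contra hn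
    exact absurd (h ω hn) (not_le.2 hω)
  have hBμ : μ.real B ≤ η := ENNReal.toReal_le_of_le_ofReal hη.le ((measure_mono hBb).trans hb)
  rw [← integral_sub (gi hξ) (gi hζ), ← Real.norm_eq_abs]
  have hi : Integrable (fun ω => L * η + B.indicator (fun _ => C) ω) μ :=
    (integrable_const _).add ((integrable_const C).indicator hBm)
  refine (norm_integral_le_of_norm_le hi (ae_of_all _ fun ω => ?_)).trans ?_
  · rw [Real.norm_eq_abs]
    by_cases hω : ω ∈ B
    · rw [indicator_of_mem hω]
      have := hC (ξ ω) (ζ ω)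
      nlinarith
    · rw [indicator_of_notMem hω, add_zero]
      have : |ξ ω - ζ ω| ≤ η := not_lt.1 hω
      exact (hL _ _).trans (by gcongr)
  · rw [integral_add (integrable_const _) ((integrable_const C).indicator hBm), integral_indicator_const _ hBm]
    simp
    nlinarith

lemma main_lip (hY : IsBESQ μ ℱ δ y Y) (hY' : IsBESQ μ' ℱ' δ 0 Y') (hδ : 0 ≤ δ) (hy : 0 ≤ y) {α γ : ℝ}
    (hα : 0 ≤ α) (hγ : -α < γ) {g : ℝ → ℝ} {L C : ℝ}
    (hL0 : 0 ≤ L) (hL : ∀ x y, |g x - g y| ≤ L * |x - y|) (hg : Continuous g) (hC : ∀ x y, |g x - g y| ≤ C) :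
    Tendsto (fun t : ℝ => ∫ ω, g ((∫ s in (1:ℝ)..t, s ^ γ * (Y s ω) ^ α) / t ^ (1 + γ + α)) ∂μ)
        atTop (nhds (∫ ω', g (∫ s in (0:ℝ)..1, s ^ γ * (Y' s ω') ^ α) ∂μ')) := by
  have C0 : 0 ≤ C := (abs_nonneg _).trans (hC 0 0)
  rw [Metric.tendsto_nhds]
  intro r hr
  set η := r / (4 * (L + C + 1)) with hη'
  have hη : 0 < η := by positivity
  have hηr : (L + C) * η ≤ r / 4 := by
    rw [hη', mul_div_assoc', div_le_iff₀ (by positivity)]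
    nlinarith
  obtain ⟨ε, hε, hε1, p, h1, h2⟩ := approx (m := m) (m' := m') μ μ' hδ hy hα hγ hη
  obtain ⟨b', hb', hF'⟩ := h2 ℱ' 0 Y' hY' 0 le_rfl hε.le le_rfl (by simp)
  have d' := close_of_bad (hY'.F_meas α γ 0 1) (hY'.X_meas hε1 p) hη hL0 hL hg.measurable hC hb' hF'
  have hX := (Metric.tendsto_nhds.1 (X_tendsto (γ := γ) hY hY' hδ hε hε1 p hg)) (r / 4) (by positivity)
  filter_upwards [hX, eventually_ge_atTop (1 / ε)] with t hX ht
  have ht0 : 0 < t := lt_of_lt_of_le (by positivity) ht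
  obtain ⟨b, hb, hF⟩ := h1 _ _ _ (hY.scale ht0) (1 / t) (by positivity) (by rw [one_div_le ht0 hε]; exact ht)
    (by positivity) (by rw [mul_one_div])
  have d := close_of_bad ((hY.scale ht0).F_meas α γ (1 / t) 1) ((hY.scale ht0).X_meas hε1 p) hη hL0 hL hg.measurable hC hb hF
  simp_rw [hY.scale_func ht0]
  rw [Real.dist_eq] at hX ⊢
  have := abs_le.1 d
  have := abs_le.1 d'
  have := abs_lt.1 hX
  rw [abs_lt]
  constructor <;> linarith

end IsBESQ

/-- Convergence in distribution is expressed by testing against all bounded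
continuous functions. -/
theorem stmt_14 {Ω : Type*} {m : MeasurableSpace Ω} (μ : Measure Ω) [IsProbabilityMeasure μ]
    (ℱ : Filtration ℝ m) (δ y : ℝ) (hδ : 0 < δ) (hy : 0 ≤ y)
    (Y : ℝ → Ω → ℝ) (hY : IsBESQ μ ℱ δ y Y)
    {Ω' : Type*} {m' : MeasurableSpace Ω'} (μ' : Measure Ω') [IsProbabilityMeasure μ']
    (ℱ' : Filtration ℝ m') (Ytil : ℝ → Ω' → ℝ) (hYtil : IsBESQ μ' ℱ' δ 0 Ytil)
    (α γ : ℝ) (hα : 0 ≤ α) (hγ : -α < γ) :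
    ∀ g : BoundedContinuousFunction ℝ ℝ,
      Tendsto
        (fun t : ℝ => ∫ ω, g ((∫ s in (1:ℝ)..t, s ^ γ * (Y s ω) ^ α) / t ^ (1 + γ + α)) ∂μ)
        atTop
        (nhds (∫ ω', g (∫ s in (0:ℝ)..1, s ^ γ * (Ytil s ω') ^ α) ∂μ')) := by
  have hFm : ∀ t : ℝ, Measurable (fun ω => (∫ s in (1:ℝ)..t, s ^ γ * (Y s ω) ^ α) / t ^ (1 + γ + α)) :=
    fun t => (hY.F_meas α γ 1 t).div_const _
  have hFm' := hYtil.F_meas α γ 0 1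
  let P : ℝ → ProbabilityMeasure ℝ := fun t => ⟨μ.map _, Measure.isProbabilityMeasure_map (hFm t).aemeasurable⟩
  let P' : ProbabilityMeasure ℝ := ⟨μ'.map _, Measure.isProbabilityMeasure_map hFm'.aemeasurable⟩
  have key : Tendsto P atTop (nhds P') := by
    rw [tendsto_iff_forall_lipschitz_integral_tendsto]
    rintro f ⟨C, hC⟩ ⟨L, hL⟩
    have := IsBESQ.main_lip hY hYtil hδ.le hy hα hγ (g := f) (L := L) (C := C) L.2
      (fun x y => hL.dist_le_mul x y) hL.continuous hC
    have e' : ∫ x, f x ∂(P' : Measure ℝ) = ∫ ω', f (∫ s in (0:ℝ)..1, s ^ γ * (Ytil s ω') ^ α) ∂μ' :=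
      integral_map hFm'.aemeasurable hL.continuous.aestronglyMeasurable
    have e : ∀ t, ∫ x, f x ∂(P t : Measure ℝ) = ∫ ω, f ((∫ s in (1:ℝ)..t, s ^ γ * (Y s ω) ^ α) / t ^ (1 + γ + α)) ∂μ :=
      fun t => integral_map (hFm t).aemeasurable hL.continuous.aestronglyMeasurable
    rw [e']
    simp_rw [e]
    exact this
  intro g
  have h := (ProbabilityMeasure.tendsto_iff_forall_integral_tendsto.1 key) g
  have e' : ∫ x, g x ∂(P' : Measure ℝ) = ∫ ω', g (∫ s in (0:ℝ)..1, s ^ γ * (Ytil s ω') ^ α) ∂μ' :=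
    integral_map hFm'.aemeasurable g.continuous.aestronglyMeasurable
  have e : ∀ t, ∫ x, g x ∂(P t : Measure ℝ) = ∫ ω, g ((∫ s in (1:ℝ)..t, s ^ γ * (Y s ω) ^ α) / t ^ (1 + γ + α)) ∂μ :=
    fun t => integral_map (hFm t).aemeasurable g.continuous.aestronglyMeasurable
  rw [e'] at h
  simp_rw [e] at h
  exact h
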